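/- Let s be an even integer with s ≥ 6, let N ≥ 2s, let 0 ≤ δ ≤ π/2, and let x,y ∈ SO(3) with ω(y⁻¹x) ≤ δ/(N+1). Then for all i,k ∈ {1,2,3}: |X_i^x X_i^x σ_N(x,y) − σ̃_N″(0)| ≤ (d̃_s/2)(N+1)²δ² and |X_i^x X_i^x X_k^y σ_N(x,y)| ≤ d̃_s((N+1)³δ + (1/4)(N+1)²δ²) + (c̃_s/4)(N+1)δ; and for i,j,n pairwise distinct: |X_j^x X_i^x σ_N(x,y) − (ε_{jin}/2)·X_n^x σ_N(x,y)| ≤ (d̃_s/4)(N+1)²δ², and for every k ∈ {i,j,n}: |X_j^x X_i^x X_k^y σ_N(x,y) − (ε_{jin}/2)·X_n^x X_k^y σ_N(x,y)| ≤ d̃_s((N+1)³δ + (1/4)(N+1)²δ²) + (c̃_s/4)(N+1)δ. -/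

import Mathlib

noncomputable section

abbrev Mat3 := Matrix (Fin 3) (Fin 3) ℝ

/-- membership in SO(3) -/
def IsSO3 (x : Mat3) : Prop := x.transpose * x = 1 ∧ x.det = 1

/-- rotation angle -/
def rotAngle (x : Mat3) : ℝ := Real.arccos ((Matrix.trace x - 1) / 2)

/-- generators of so(3) -/
def Lgen : Fin 3 → Mat3 :=
  ![!![0, 0, 0; 0, 0, -1; 0, 1, 0],
    !![0, 0, 1; 0, 0, 0; -1, 0, 0],
    !![0, -1, 0; 1, 0, 0; 0, 0, 0]]

/-- derivative in the first variable along generator `i` -/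
def Xx (i : Fin 3) (f : Mat3 → Mat3 → ℝ) : Mat3 → Mat3 → ℝ :=
  fun x y => deriv (fun t : ℝ => f (x * NormedSpace.exp (t • Lgen i)) y) 0

/-- derivative in the second variable along generator `i` -/
def Xy (i : Fin 3) (f : Mat3 → Mat3 → ℝ) : Mat3 → Mat3 → ℝ :=
  fun x y => deriv (fun t : ℝ => f x (y * NormedSpace.exp (t • Lgen i))) 0

/-- iterated integrals of the sign of the Chebyshev polynomial: the perfect B-spline chain -/
def fspline (s : ℕ) : ℕ → ℝ → ℝ
  | 0 => fun x => (-1 : ℝ) ^ (s - 1) * Real.sign ((Polynomial.Chebyshev.U ℝ ((s : ℤ) - 1)).eval x)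
  | (k + 1) => fun x => ∫ t in (-1 : ℝ)..x, fspline s k t

/-- the scaled perfect B-spline g̃_{s-1} -/
def gtilde (s : ℕ) (x : ℝ) : ℝ := fspline s (s - 1) (2 * x)

/-- discrete norm ‖g̃‖_{1,N} -/
def gnorm (s N : ℕ) : ℝ :=
  ∑ k ∈ Finset.Icc (-(N : ℤ)) (N : ℤ), gtilde s ((k : ℝ) / (2 * ((N : ℝ) + 1)))

/-- the trigonometric kernel σ̃_N (real-valued) -/
def sigmaT (s N : ℕ) (t : ℝ) : ℝ :=
  ((1 / (gnorm s N : ℂ)) *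
      ∑ k ∈ Finset.Icc (-(N : ℤ)) (N : ℤ),
        (gtilde s ((k : ℝ) / (2 * ((N : ℝ) + 1))) : ℂ) * Complex.exp ((k : ℂ) * t * Complex.I)).re

/-- the zonal kernel σ_N on SO(3) -/
def sigmaK (s N : ℕ) (x y : Mat3) : ℝ := sigmaT s N (rotAngle (y⁻¹ * x))

/-- rotation axis components -/
def axisComp : Fin 3 → Mat3 → ℝ :=
  ![fun x => (x 2 1 - x 1 2) / (2 * Real.sin (rotAngle x)),
    fun x => (x 0 2 - x 2 0) / (2 * Real.sin (rotAngle x)),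
    fun x => (x 1 0 - x 0 1) / (2 * Real.sin (rotAngle x))]

/-- Levi-Civita symbol on `Fin 3` -/
def eps3 (a b c : Fin 3) : ℝ :=
  if (a, b, c) = (0, 1, 2) ∨ (a, b, c) = (1, 2, 0) ∨ (a, b, c) = (2, 0, 1) then 1
  else if (a, b, c) = (2, 1, 0) ∨ (a, b, c) = (1, 0, 2) ∨ (a, b, c) = (0, 2, 1) then -1
  else 0

/-- constants c_{l,s} -/
def cConst : ℕ → ℕ → ℝ
  | 0, s => 1.02 * (Nat.factorial (s - 1)) * 2 ^ s * s
  | 1, s => 1.02 * (Nat.factorial (s - 1)) * 2 ^ s * (2 * s)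
  | 2, s => 1.02 * (Nat.factorial (s - 1)) * 2 ^ s * (4 * s + 1)
  | _, s => 1.02 * (Nat.factorial (s - 1)) * 2 ^ s * (9 * s - 2)

/-- ζ(m) for natural m -/
def zetaNat (m : ℕ) : ℝ := ∑' n : ℕ, (1 : ℝ) / ((n : ℝ) + 1) ^ m

/-- constants C_{i,s} = 124 c_{i,s} ζ(s-2) -/
def CConst (i s : ℕ) : ℝ := 124 * cConst i s * zetaNat (s - 2)

end

open scoped Real

/-!
Write `σ_N = ∑ k, w k * cos (k ω)` with weights `w k = g̃ (k / (2(N+1))) / ‖g̃‖_{1,N}`.  These are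
nonnegative: a sign change of `f_k` in the interior forces one more of `f_{k-1}` (Rolle), while
`f_0` changes sign only at the `s - 1` zeros of `U_{s-1}`.

For a single frequency, `cos (k ω)` is the Chebyshev polynomial `T_k` evaluated at `cos ω`, an
affine function of the trace.  Left-invariant derivatives of a function of the trace are explicit
through Rodrigues' formula, so each expression to be bounded is a combination of derivatives of
`T_k` at `cos ω`, and is at most a combination of `k² ω`, `k⁴ ω` and `k⁴ ω²`.  Summing against the
weights leaves only the moments `∑ w k * k²` and `∑ w k * k⁴`.

The moments are Riemann sums of `f_{s-1}(x) x ^ m`.  By Poisson summation they differ from the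
integrals, which repeated integration by parts evaluates exactly, by a sum of Fourier coefficients
of order `(2π(N+1))⁻ˢ`; this is where the factor `1.001` comes from.
-/

section Rotations

open Matrix

attribute [local instance] Matrix.linftyOpNormedRing Matrix.linftyOpNormedAlgebra

lemma Lgen_transpose (i : Fin 3) : (Lgen i)ᵀ = -Lgen i := by
  fin_cases i <;> ext a b <;> fin_cases a <;> fin_cases b <;> simp [Lgen]

lemma trace_Lgen (i : Fin 3) : trace (Lgen i) = 0 := by
  fin_cases i <;> simp [Lgen, trace_fin_three]

lemma Lgen_mul_Lgen (i j : Fin 3) : Lgen j * Lgen i = single i j 1 - (1 : Mat3) i j • 1 := by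
  fin_cases i <;> fin_cases j <;> ext a b <;> fin_cases a <;> fin_cases b <;>
    simp [Lgen, mul_apply, Fin.sum_univ_three]

lemma Lgen_mul_Lgen_sub_comm {i j n : Fin 3} (hij : i ≠ j) (hjn : j ≠ n) (hin : i ≠ n) :
    Lgen j * Lgen i - Lgen i * Lgen j = eps3 j i n • Lgen n := by
  rw [Lgen_mul_Lgen, Lgen_mul_Lgen, one_apply_ne hij, one_apply_ne hij.symm]
  ext a b
  fin_cases i <;> fin_cases j <;> fin_cases n <;> fin_cases a <;> fin_cases b <;>
    simp_all [Lgen, eps3]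

theorem IsSO3.mul {x y : Mat3} (hx : IsSO3 x) (hy : IsSO3 y) : IsSO3 (x * y) := by
  refine ⟨?_, by rw [det_mul, hx.2, hy.2, one_mul]⟩
  rw [transpose_mul, mul_assoc, ← mul_assoc xᵀ, hx.1, one_mul, hy.1]

theorem IsSO3.mul_transpose {x : Mat3} (hx : IsSO3 x) : x * xᵀ = 1 :=
  mul_eq_one_comm.mp hx.1

theorem IsSO3.transpose {x : Mat3} (hx : IsSO3 x) : IsSO3 xᵀ :=
  ⟨by rw [transpose_transpose, hx.mul_transpose], by rw [det_transpose, hx.2]⟩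

theorem IsSO3.inv_eq {x : Mat3} (hx : IsSO3 x) : x⁻¹ = xᵀ :=
  inv_eq_left_inv hx.1

lemma isSO3_exp_of_transpose_eq_neg {A : Mat3} (hA : Aᵀ = -A) : IsSO3 (NormedSpace.exp A) := by
  have orthogonal : ∀ B : Mat3, Bᵀ = -B → (NormedSpace.exp B)ᵀ * NormedSpace.exp B = 1 := by
    intro B hB
    rw [← exp_transpose, hB, ← exp_add_of_commute _ _ (Commute.neg_left (Commute.refl B)),
      neg_add_cancel, NormedSpace.exp_zero]
  -- `exp A = exp (A / 2) ^ 2` has determinant `det (exp (A / 2)) ^ 2 = 1`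
  refine ⟨orthogonal A hA, ?_⟩
  have hdet := congrArg det (orthogonal ((1 / 2 : ℝ) • A) (by rw [transpose_smul, hA, smul_neg]))
  rw [det_mul, det_transpose, det_one, ← det_mul,
    ← exp_add_of_commute _ _ (Commute.refl _), ← add_smul, add_halves, one_smul] at hdet
  exact hdet

lemma isSO3_exp_smul_Lgen (i : Fin 3) (t : ℝ) : IsSO3 (NormedSpace.exp (t • Lgen i)) :=
  isSO3_exp_of_transpose_eq_neg (by rw [transpose_smul, Lgen_transpose, smul_neg])

lemma Xx_congr {f g : Mat3 → Mat3 → ℝ} (h : ∀ x y, IsSO3 x → IsSO3 y → f x y = g x y)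
    (i : Fin 3) {x y : Mat3} (hx : IsSO3 x) (hy : IsSO3 y) : Xx i f x y = Xx i g x y :=
  congrArg (deriv · 0) (funext fun t => h _ _ (hx.mul (isSO3_exp_smul_Lgen i t)) hy)

lemma Xy_congr {f g : Mat3 → Mat3 → ℝ} (h : ∀ x y, IsSO3 x → IsSO3 y → f x y = g x y)
    (i : Fin 3) {x y : Mat3} (hx : IsSO3 x) (hy : IsSO3 y) : Xy i f x y = Xy i g x y :=
  congrArg (deriv · 0) (funext fun t => h _ _ hx (hy.mul (isSO3_exp_smul_Lgen i t)))

lemma hasDerivAt_trace_mul_exp_mul (A B : Mat3) (i : Fin 3) :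
    HasDerivAt (fun t : ℝ => trace (A * NormedSpace.exp (t • Lgen i) * B))
      (trace (A * Lgen i * B)) 0 := by
  have hexp := hasDerivAt_exp_smul_const (𝕂 := ℝ) (Lgen i) (0 : ℝ)
  rw [zero_smul, NormedSpace.exp_zero, one_mul] at hexp
  exact (LinearMap.toContinuousLinearMap (traceLinearMap (Fin 3) ℝ ℝ)).hasFDerivAt.comp_hasDerivAt
    (0 : ℝ) ((hexp.const_mul A).mul_const B)

end Rotations

section SymmetrisedGenerators

open Matrix

/-- The symmetrised product `(Lⱼ Lᵢ + Lᵢ Lⱼ) / 2` of two generators. -/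
noncomputable def symGen (i j : Fin 3) : Mat3 :=
  (1 / 2 : ℝ) • (Lgen j * Lgen i + Lgen i * Lgen j)

lemma symGen_self (i : Fin 3) : symGen i i = Lgen i * Lgen i := by
  rw [symGen, ← two_smul ℝ, smul_smul, one_div_mul_cancel two_ne_zero, one_smul]

lemma Lgen_mul_Lgen_eq_symGen_add {i j n : Fin 3} (hij : i ≠ j) (hjn : j ≠ n) (hin : i ≠ n) :
    Lgen j * Lgen i = symGen i j + (eps3 j i n / 2) • Lgen n := by
  rw [div_eq_inv_mul, mul_smul, ← Lgen_mul_Lgen_sub_comm hij hjn hin, symGen]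
  module

lemma trace_mul_Lgen_mul_Lgen (A : Mat3) (i j : Fin 3) :
    trace (A * (Lgen j * Lgen i)) = A j i - (1 : Mat3) i j * trace A := by
  rw [Lgen_mul_Lgen, mul_sub, trace_sub, trace_mul_single, Matrix.mul_smul, mul_one, trace_smul,
    smul_eq_mul, MulOpposite.op_one, one_smul]

lemma trace_mul_symGen (A : Mat3) (i j : Fin 3) :
    trace (A * symGen i j) = (A i j + A j i) / 2 - (1 : Mat3) i j * trace A := by
  have hsymm : (1 : Mat3) j i = (1 : Mat3) i j :=
    congrFun₂ (transpose_one (n := Fin 3) (α := ℝ)) i j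
  rw [symGen, Matrix.mul_smul, trace_smul, mul_add, trace_add, trace_mul_Lgen_mul_Lgen,
    trace_mul_Lgen_mul_Lgen, hsymm, smul_eq_mul]
  ring

end SymmetrisedGenerators

section KernelDerivatives

open Matrix Polynomial

/-- The zonal kernel `P ((tr z - 1) / 2)`, `z = yᵀ x`, of a polynomial `P` in the cosine of the
rotation angle. -/
noncomputable def polyKernel (P : ℝ[X]) (x y : Mat3) : ℝ :=
  P.eval ((trace (yᵀ * x) - 1) / 2)

lemma hasDerivAt_trace_mul_transpose (x y : Mat3) (k : Fin 3) :
    HasDerivAt (fun t : ℝ => trace ((y * NormedSpace.exp (t • Lgen k))ᵀ * x))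
      (-trace (Lgen k * (yᵀ * x))) 0 := by
  have htr : ∀ A : Mat3, trace (xᵀ * y * A * 1) = trace ((y * A)ᵀ * x) := fun A => by
    rw [← trace_transpose]
    simp only [transpose_mul, transpose_transpose, mul_one, mul_assoc]
  have hderiv := hasDerivAt_trace_mul_exp_mul (xᵀ * y) 1 k
  simp only [htr] at hderiv
  rwa [transpose_mul, Lgen_transpose, neg_mul, neg_mul, trace_neg, mul_assoc] at hderiv

lemma hasDerivAt_polyKernel_left (P : ℝ[X]) (x y : Mat3) (i : Fin 3) :
    HasDerivAt (fun t : ℝ => polyKernel P (x * NormedSpace.exp (t • Lgen i)) y)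
      (polyKernel (derivative P) x y * (trace (yᵀ * x * Lgen i) / 2)) 0 := by
  have htrace := hasDerivAt_trace_mul_exp_mul (yᵀ * x) 1 i
  simp only [mul_one, mul_assoc yᵀ x] at htrace
  have hcomp := (P.hasDerivAt _).comp (0 : ℝ) ((htrace.sub_const 1).div_const 2)
  simpa only [polyKernel, Function.comp_def, zero_smul, NormedSpace.exp_zero, mul_one,
    mul_assoc] using hcomp

lemma hasDerivAt_polyKernel_mul_trace (P : ℝ[X]) (B C x y : Mat3) (i : Fin 3) :
    HasDerivAt (fun t : ℝ => polyKernel P (x * NormedSpace.exp (t • Lgen i)) y *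
        (trace (B * (yᵀ * (x * NormedSpace.exp (t • Lgen i))) * C) / 2))
      (polyKernel (derivative P) x y * (trace (yᵀ * x * Lgen i) / 2) *
          (trace (B * (yᵀ * x) * C) / 2)
        + polyKernel P x y * (trace (B * (yᵀ * x) * (Lgen i * C)) / 2)) 0 := by
  have htrace := hasDerivAt_trace_mul_exp_mul (B * (yᵀ * x)) C i
  have hprod := (hasDerivAt_polyKernel_left P x y i).mul (htrace.div_const 2)
  simpa only [Pi.mul_def, mul_assoc, zero_smul, NormedSpace.exp_zero, mul_one, one_mul] using hprod

lemma Xx_polyKernel (P : ℝ[X]) (i : Fin 3) (x y : Mat3) :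
    Xx i (polyKernel P) x y = polyKernel (derivative P) x y * (trace (yᵀ * x * Lgen i) / 2) :=
  (hasDerivAt_polyKernel_left P x y i).deriv

lemma Xy_polyKernel (P : ℝ[X]) (k : Fin 3) (x y : Mat3) :
    Xy k (polyKernel P) x y =
      -(polyKernel (derivative P) x y * (trace (Lgen k * (yᵀ * x)) / 2)) := by
  have htrace := ((hasDerivAt_trace_mul_transpose x y k).sub_const 1).div_const 2
  have hcomp := ((P.hasDerivAt _).comp (0 : ℝ) htrace).deriv
  simpa only [Xy, polyKernel, Function.comp_def, zero_smul, NormedSpace.exp_zero, mul_one,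
    neg_div, mul_neg] using hcomp

lemma Xx_Xx_polyKernel (P : ℝ[X]) (i j : Fin 3) (x y : Mat3) :
    Xx j (Xx i (polyKernel P)) x y =
      polyKernel (derivative (derivative P)) x y *
          (trace (yᵀ * x * Lgen j) / 2) * (trace (yᵀ * x * Lgen i) / 2)
        + polyKernel (derivative P) x y * (trace (yᵀ * x * (Lgen j * Lgen i)) / 2) := by
  have hderiv := hasDerivAt_polyKernel_mul_trace (derivative P) 1 (Lgen i) x y j
  simp only [one_mul] at hderiv
  rw [funext₂ (Xx_polyKernel P i)]
  exact hderiv.deriv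

lemma Xx_Xy_polyKernel (P : ℝ[X]) (i k : Fin 3) (x y : Mat3) :
    Xx i (Xy k (polyKernel P)) x y =
      -(polyKernel (derivative (derivative P)) x y *
          (trace (yᵀ * x * Lgen i) / 2) * (trace (Lgen k * (yᵀ * x)) / 2)
        + polyKernel (derivative P) x y * (trace (Lgen k * (yᵀ * x) * Lgen i) / 2)) := by
  have hderiv := (hasDerivAt_polyKernel_mul_trace (derivative P) (Lgen k) 1 x y i).neg
  simp only [mul_one] at hderiv
  rw [funext₂ (Xy_polyKernel P k)]
  exact hderiv.deriv

lemma Xx_Xx_Xy_polyKernel (P : ℝ[X]) (i j k : Fin 3) (x y : Mat3) :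
    Xx j (Xx i (Xy k (polyKernel P))) x y =
      -(polyKernel (derivative (derivative (derivative P))) x y *
          (trace (yᵀ * x * Lgen j) / 2) * (trace (yᵀ * x * Lgen i) / 2) *
          (trace (Lgen k * (yᵀ * x)) / 2)
        + polyKernel (derivative (derivative P)) x y *
          (trace (yᵀ * x * (Lgen j * Lgen i)) / 2 * (trace (Lgen k * (yᵀ * x)) / 2)
            + trace (yᵀ * x * Lgen i) / 2 * (trace (Lgen k * (yᵀ * x) * Lgen j) / 2)
            + trace (yᵀ * x * Lgen j) / 2 * (trace (Lgen k * (yᵀ * x) * Lgen i) / 2))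
        + polyKernel (derivative P) x y *
          (trace (Lgen k * (yᵀ * x) * (Lgen j * Lgen i)) / 2)) := by
  have hfirst := hasDerivAt_polyKernel_mul_trace (derivative (derivative P)) 1 (Lgen i) x y j
  have htrace := hasDerivAt_trace_mul_exp_mul (Lgen k * (yᵀ * x)) 1 j
  have hsecond := hasDerivAt_polyKernel_mul_trace (derivative P) (Lgen k) (Lgen i) x y j
  simp only [one_mul, mul_one, mul_assoc] at hfirst htrace hsecond
  have hderiv := (((hfirst.mul (htrace.div_const 2)).add hsecond).neg).deriv
  rw [funext₂ (Xx_Xy_polyKernel P i k)]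
  simp only [Xx, mul_assoc]
  refine (Eq.trans ?_ hderiv).trans ?_
  · simp only [Pi.mul_def, Pi.add_def, Pi.neg_def, mul_assoc]
  · simp only [zero_smul, NormedSpace.exp_zero, mul_one, one_mul]
    ring

end KernelDerivatives

section Rodrigues

open Matrix

/-- The skew-symmetric matrix of the cross product with `v`, which is `v₀ L₁ + v₁ L₂ + v₂ L₃`. -/
noncomputable def crossMatrix (v : Fin 3 → ℝ) : Mat3 := ∑ m, v m • Lgen m

/-- Rodrigues' matrix of the rotation about the unit vector `n` by an angle with cosine `c` and
sine `s`. -/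
noncomputable def rodrigues (n : Fin 3 → ℝ) (c s : ℝ) : Mat3 :=
  c • 1 + (1 - c) • vecMulVec n n + s • crossMatrix n

lemma crossMatrix_eq (v : Fin 3 → ℝ) :
    crossMatrix v = !![0, -v 2, v 1; v 2, 0, -v 0; -v 1, v 0, 0] := by
  ext a b
  fin_cases a <;> fin_cases b <;> simp [crossMatrix, Lgen, Fin.sum_univ_three]

lemma crossMatrix_smul (r : ℝ) (v : Fin 3 → ℝ) : crossMatrix (r • v) = r • crossMatrix v := by
  simp only [crossMatrix, Pi.smul_apply, smul_eq_mul, mul_smul, Finset.smul_sum]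

lemma transpose_crossMatrix (v : Fin 3 → ℝ) : (crossMatrix v)ᵀ = -crossMatrix v := by
  simp only [crossMatrix, transpose_sum, transpose_smul, Lgen_transpose, smul_neg,
    Finset.sum_neg_distrib]

lemma crossMatrix_mulVec (v w : Fin 3 → ℝ) : crossMatrix v *ᵥ w = v ⨯₃ w := by
  rw [crossMatrix_eq, cross_apply]
  ext a
  fin_cases a <;> simp [mulVec, dotProduct, Fin.sum_univ_three] <;> ring

lemma trace_crossMatrix_mul_self (v : Fin 3 → ℝ) :
    trace (crossMatrix v * crossMatrix v) = -2 * (v ⬝ᵥ v) := by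
  simp only [crossMatrix_eq, trace_fin_three, mul_apply, Fin.sum_univ_three, dotProduct, of_apply,
    cons_val]
  ring

lemma exists_eq_crossMatrix {A : Mat3} (hA : Aᵀ = -A) : ∃ v, A = crossMatrix v := by
  have hskew : ∀ a b, A a b = -A b a := fun a b => congrFun₂ hA b a
  refine ⟨![A 2 1, A 0 2, A 1 0], ?_⟩
  rw [crossMatrix_eq]
  ext a b
  fin_cases a <;> fin_cases b <;> simp <;> linarith [hskew 0 0, hskew 1 1, hskew 2 2, hskew 0 1,
    hskew 0 2, hskew 1 2]

lemma two_mul_trace_adjugate (A : Mat3) :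
    2 * trace (adjugate A) = trace A ^ 2 - trace (A * A) := by
  simp only [adjugate_fin_three, trace_fin_three, mul_apply, Fin.sum_univ_three, of_apply, cons_val]
  ring

theorem IsSO3.trace_mul_self {z : Mat3} (hz : IsSO3 z) :
    trace (z * z) = trace z ^ 2 - 2 * trace z := by
  have hadj : adjugate z = zᵀ := by
    rw [← hz.inv_eq, inv_def, hz.2, Ring.inverse_one, one_smul]
  have htrace := two_mul_trace_adjugate z
  rw [hadj, trace_transpose] at htrace
  linarith

theorem IsSO3.det_sub_one {z : Mat3} (hz : IsSO3 z) : det (z - 1) = 0 := by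
  have hfactor : z - 1 = -(z * (z - 1)ᵀ) := by
    rw [transpose_sub, transpose_one, mul_sub, hz.mul_transpose, mul_one, neg_sub]
  have hneg : det (z - 1) = -det (z - 1) := by
    conv_lhs => rw [hfactor]
    rw [det_neg, det_mul, hz.2, det_transpose, Fintype.card_fin]
    ring
  linarith

theorem IsSO3.exists_axis {z : Mat3} (hz : IsSO3 z) :
    ∃ n : Fin 3 → ℝ, n ⬝ᵥ n = 1 ∧ z *ᵥ n = n ∧ zᵀ *ᵥ n = n := by
  obtain ⟨v, hv, hker⟩ := exists_mulVec_eq_zero_iff.2 hz.det_sub_one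
  rw [sub_mulVec, one_mulVec, sub_eq_zero] at hker
  have hpos : 0 < v ⬝ᵥ v :=
    (Fintype.sum_nonneg fun a => mul_self_nonneg (v a)).lt_of_ne' (dotProduct_self_eq_zero.not.2 hv)
  have hfix : z *ᵥ ((√(v ⬝ᵥ v))⁻¹ • v) = (√(v ⬝ᵥ v))⁻¹ • v := by rw [mulVec_smul, hker]
  refine ⟨(√(v ⬝ᵥ v))⁻¹ • v, ?_, hfix, ?_⟩
  · rw [smul_dotProduct, dotProduct_smul, smul_smul, ← mul_inv, Real.mul_self_sqrt hpos.le,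
      smul_eq_mul, inv_mul_cancel₀ hpos.ne']
  · conv_lhs => rw [← hfix]
    rw [mulVec_mulVec, hz.1, one_mulVec]

theorem IsSO3.add_transpose_eq {z : Mat3} (hz : IsSO3 z) {n : Fin 3 → ℝ} (hn : n ⬝ᵥ n = 1)
    (hfix : z *ᵥ n = n) (hfix' : zᵀ *ᵥ n = n) {c : ℝ} (hc : trace z = 1 + 2 * c) :
    z + zᵀ = (2 * c) • 1 + (2 * (1 - c)) • vecMulVec n n := by
  set D : Mat3 := z + zᵀ - ((2 * c) • 1 + (2 * (1 - c)) • vecMulVec n n) with hD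
  have hsymm : Dᴴ = D := by
    simp [hD, conjTranspose_eq_transpose_of_trivial, transpose_vecMulVec, add_comm]
  suffices trace (Dᴴ * D) = 0 from
    sub_eq_zero.1 (trace_conjTranspose_mul_self_eq_zero_iff.1 this)
  have htrace := hz.trace_mul_self
  have htrace' := hz.transpose.trace_mul_self
  have hvecMul : n ᵥ* z = n := by rwa [← mulVec_transpose]
  rw [hsymm, hD]
  simp only [sub_mul, mul_sub, add_mul, mul_add, smul_mul_assoc, mul_smul_comm, mul_one, one_mul,
    mul_vecMulVec, vecMulVec_mul, vecMulVec_mulVec, vecMul_transpose, hfix, hfix', hvecMul, hn,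
    MulOpposite.op_one, one_smul, trace_add, trace_sub, trace_smul, trace_vecMulVec,
    trace_transpose, hz.1, hz.mul_transpose, trace_one, Fintype.card_fin, htrace, htrace', hc,
    smul_eq_mul]
  push_cast
  ring

theorem IsSO3.exists_sub_transpose_eq {z : Mat3} (hz : IsSO3 z) {n : Fin 3 → ℝ} (hn : n ⬝ᵥ n = 1)
    (hfix : z *ᵥ n = n) (hfix' : zᵀ *ᵥ n = n) {c : ℝ} (hc : trace z = 1 + 2 * c) :
    ∃ r : ℝ, r ^ 2 + c ^ 2 = 1 ∧ z - zᵀ = (2 * r) • crossMatrix n := by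
  obtain ⟨v, hv⟩ := exists_eq_crossMatrix (A := z - zᵀ) (by simp)
  have hcross : v ⨯₃ n = 0 := by
    rw [← crossMatrix_mulVec, ← hv, sub_mulVec, hfix, hfix', sub_self]
  have hparallel : v = (v ⬝ᵥ n) • n := by
    have htriple := cross_cross_eq_smul_sub_smul' n v n
    rw [hcross, map_zero, hn, one_smul, eq_comm, sub_eq_zero] at htriple
    exact htriple
  have hnorm := trace_crossMatrix_mul_self v
  have htrace := hz.trace_mul_self
  have htrace' := hz.transpose.trace_mul_self
  refine ⟨(v ⬝ᵥ n) / 2, ?_, ?_⟩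
  · rw [← hv] at hnorm
    simp only [sub_mul, mul_sub, hz.1, hz.mul_transpose, trace_sub, trace_one, Fintype.card_fin,
      htrace, htrace', trace_transpose, hc] at hnorm
    have hself : v ⬝ᵥ v = (v ⬝ᵥ n) ^ 2 := by
      nth_rw 1 [hparallel]
      rw [smul_dotProduct, dotProduct_comm n v, smul_eq_mul, sq]
    rw [hself] at hnorm
    push_cast at hnorm
    linarith
  · rw [mul_div_cancel₀ _ (two_ne_zero' ℝ), ← crossMatrix_smul, ← hparallel, hv]

lemma rodrigues_neg (n : Fin 3 → ℝ) (c s : ℝ) : rodrigues (-n) c (-s) = rodrigues n c s := by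
  rw [rodrigues, rodrigues, neg_vecMulVec, vecMulVec_neg, neg_neg, ← neg_one_smul ℝ n,
    crossMatrix_smul, smul_smul, neg_mul_neg, mul_one]

theorem IsSO3.exists_eq_rodrigues {z : Mat3} (hz : IsSO3 z) :
    ∃ n : Fin 3 → ℝ, n ⬝ᵥ n = 1 ∧
      z = rodrigues n (Real.cos (rotAngle z)) (Real.sin (rotAngle z)) := by
  obtain ⟨n, hn, hfix, hfix'⟩ := hz.exists_axis
  have hc : trace z = 1 + 2 * ((trace z - 1) / 2) := by ring
  obtain ⟨r, hr, hskew⟩ := hz.exists_sub_transpose_eq hn hfix hfix' hc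
  have hsymm := hz.add_transpose_eq hn hfix hfix' hc
  have hz_eq : z = rodrigues n ((trace z - 1) / 2) r := by
    have hsplit : z = (1 / 2 : ℝ) • (z + zᵀ) + (1 / 2 : ℝ) • (z - zᵀ) := by module
    rw [hsymm, hskew] at hsplit
    rw [rodrigues]
    nth_rw 1 [hsplit]
    module
  have hcos : Real.cos (rotAngle z) = (trace z - 1) / 2 :=
    Real.cos_arccos (by nlinarith) (by nlinarith)
  rw [hcos]
  rcases sq_eq_sq_iff_eq_or_eq_neg.1
    (show Real.sin (rotAngle z) ^ 2 = r ^ 2 by rw [Real.sin_sq, hcos]; linarith) with h | h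
  · exact ⟨n, hn, by rwa [h]⟩
  · exact ⟨-n, by rwa [neg_dotProduct_neg], by rwa [h, rodrigues_neg]⟩

lemma trace_crossMatrix (v : Fin 3 → ℝ) : trace (crossMatrix v) = 0 := by
  simp only [crossMatrix, trace_sum, trace_smul, trace_Lgen, smul_zero, Finset.sum_const_zero]

lemma trace_rodrigues {n : Fin 3 → ℝ} (hn : n ⬝ᵥ n = 1) (c s : ℝ) :
    trace (rodrigues n c s) = 1 + 2 * c := by
  simp only [rodrigues, trace_add, trace_smul, trace_one, trace_vecMulVec, trace_crossMatrix, hn,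
    Fintype.card_fin, smul_eq_mul]
  push_cast
  ring

theorem IsSO3.cos_rotAngle {z : Mat3} (hz : IsSO3 z) :
    Real.cos (rotAngle z) = (trace z - 1) / 2 := by
  obtain ⟨n, hn, h⟩ := hz.exists_eq_rodrigues
  have htrace := congrArg trace h
  rw [trace_rodrigues hn] at htrace
  linarith

lemma rodrigues_apply (n : Fin 3 → ℝ) (c s : ℝ) (a b : Fin 3) :
    rodrigues n c s a b =
      c * (1 : Mat3) a b + (1 - c) * (n a * n b) + s * crossMatrix n a b := by
  simp only [rodrigues, Matrix.add_apply, Matrix.smul_apply, vecMulVec_apply, smul_eq_mul]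

lemma crossMatrix_apply_swap (n : Fin 3 → ℝ) (a b : Fin 3) :
    crossMatrix n b a = -crossMatrix n a b :=
  congrFun₂ (transpose_crossMatrix n) a b

lemma Lgen_mulVec_apply (n : Fin 3 → ℝ) (a k : Fin 3) : (Lgen k *ᵥ n) a = -crossMatrix n a k := by
  rw [crossMatrix_eq]
  fin_cases k <;> fin_cases a <;> simp [Lgen, mulVec, dotProduct, Fin.sum_univ_three]

lemma Lgen_mul_crossMatrix_apply (n : Fin 3 → ℝ) (a b k : Fin 3) :
    (Lgen k * crossMatrix n) a b = n a * (1 : Mat3) k b - n k * (1 : Mat3) a b := by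
  rw [crossMatrix_eq]
  fin_cases k <;> fin_cases a <;> fin_cases b <;> simp [Lgen, mul_apply, Fin.sum_univ_three]

lemma trace_Lgen_mul_rodrigues (n : Fin 3 → ℝ) (c s : ℝ) (k : Fin 3) :
    trace (Lgen k * rodrigues n c s) = -2 * (s * n k) := by
  have hsymm : trace (Lgen k * vecMulVec n n) = 0 := by
    have hskew : trace (Lgen k * vecMulVec n n) = -trace (Lgen k * vecMulVec n n) := by
      conv_lhs => rw [← trace_transpose, transpose_mul, transpose_vecMulVec, Lgen_transpose,
        mul_neg, trace_neg, trace_mul_comm]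
    linarith
  have hcross : trace (Lgen k * crossMatrix n) = -2 * n k := by
    simp only [trace_fin_three, Lgen_mul_crossMatrix_apply, one_apply_eq]
    fin_cases k <;> simp [one_apply] <;> ring
  simp only [rodrigues, mul_add, Matrix.mul_smul, mul_one, trace_add, trace_smul, trace_Lgen,
    hsymm, hcross, smul_eq_mul]
  ring

lemma Lgen_mul_rodrigues_symm (n : Fin 3 → ℝ) (c s : ℝ) (i j k : Fin 3) :
    (Lgen k * rodrigues n c s) i j + (Lgen k * rodrigues n c s) j i =
      s * (n i * (1 : Mat3) k j + n j * (1 : Mat3) k i - 2 * (n k * (1 : Mat3) i j))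
        - (1 - c) * (n i * crossMatrix n j k + n j * crossMatrix n i k) := by
  have hskew : Lgen k j i = -Lgen k i j := congrFun₂ (Lgen_transpose k) i j
  have hsymm : (1 : Mat3) j i = (1 : Mat3) i j :=
    congrFun₂ (transpose_one (n := Fin 3) (α := ℝ)) i j
  simp only [rodrigues, mul_add, Matrix.mul_smul, mul_one, mul_vecMulVec, Matrix.add_apply,
    Matrix.smul_apply, vecMulVec_apply, Lgen_mulVec_apply, Lgen_mul_crossMatrix_apply, hskew, hsymm,
    smul_eq_mul]
  ring

end Rodrigues

section SymmetrisedForms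

open Matrix Polynomial

/-- The second derivative of the kernel of `P` at `z = yᵀ x` along the symmetrised product
`symGen i j`, as a linear functional of `P`. -/
noncomputable def secondForm (z : Mat3) (i j : Fin 3) : ℝ[X] →ₗ[ℝ] ℝ :=
  (trace (z * Lgen j) / 2 * (trace (z * Lgen i) / 2)) •
      (leval ((trace z - 1) / 2) ∘ₗ derivative ∘ₗ derivative)
    + (trace (z * symGen i j) / 2) • (leval ((trace z - 1) / 2) ∘ₗ derivative)

/-- The mixed third derivative of the kernel of `P` at `z = yᵀ x`, along the symmetrised product
`symGen i j` in `x` and along `Lₖ` in `y`, as a linear functional of `P`. -/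
noncomputable def thirdForm (z : Mat3) (i j k : Fin 3) : ℝ[X] →ₗ[ℝ] ℝ :=
  -((trace (z * Lgen j) / 2 * (trace (z * Lgen i) / 2) * (trace (Lgen k * z) / 2)) •
        (leval ((trace z - 1) / 2) ∘ₗ derivative ∘ₗ derivative ∘ₗ derivative)
      + (trace (z * symGen i j) / 2 * (trace (Lgen k * z) / 2)
          + trace (z * Lgen i) / 2 * (trace (Lgen k * z * Lgen j) / 2)
          + trace (z * Lgen j) / 2 * (trace (Lgen k * z * Lgen i) / 2)) •
        (leval ((trace z - 1) / 2) ∘ₗ derivative ∘ₗ derivative)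
      + (trace (Lgen k * z * symGen i j) / 2) • (leval ((trace z - 1) / 2) ∘ₗ derivative))

variable (P : ℝ[X]) (x y : Mat3)

lemma Xx_Xx_polyKernel_self (i : Fin 3) :
    Xx i (Xx i (polyKernel P)) x y = secondForm (yᵀ * x) i i P := by
  rw [Xx_Xx_polyKernel, ← symGen_self]
  simp only [secondForm, polyKernel, LinearMap.add_apply, LinearMap.smul_apply,
    LinearMap.comp_apply, leval_apply, smul_eq_mul]
  ring

lemma Xx_Xx_Xy_polyKernel_self (i k : Fin 3) :
    Xx i (Xx i (Xy k (polyKernel P))) x y = thirdForm (yᵀ * x) i i k P := by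
  rw [Xx_Xx_Xy_polyKernel, ← symGen_self]
  simp only [thirdForm, polyKernel, LinearMap.add_apply, LinearMap.neg_apply,
    LinearMap.smul_apply, LinearMap.comp_apply, leval_apply, smul_eq_mul]
  ring

variable {i j n : Fin 3}

lemma Xx_Xx_polyKernel_sub (hij : i ≠ j) (hjn : j ≠ n) (hin : i ≠ n) :
    Xx j (Xx i (polyKernel P)) x y - eps3 j i n / 2 * Xx n (polyKernel P) x y =
      secondForm (yᵀ * x) i j P := by
  rw [Xx_Xx_polyKernel, Xx_polyKernel, Lgen_mul_Lgen_eq_symGen_add hij hjn hin, mul_add,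
    trace_add, Matrix.mul_smul, trace_smul]
  simp only [secondForm, polyKernel, LinearMap.add_apply, LinearMap.smul_apply,
    LinearMap.comp_apply, leval_apply, smul_eq_mul]
  ring

lemma Xx_Xx_Xy_polyKernel_sub (hij : i ≠ j) (hjn : j ≠ n) (hin : i ≠ n) (k : Fin 3) :
    Xx j (Xx i (Xy k (polyKernel P))) x y - eps3 j i n / 2 * Xx n (Xy k (polyKernel P)) x y =
      thirdForm (yᵀ * x) i j k P := by
  rw [Xx_Xx_Xy_polyKernel, Xx_Xy_polyKernel, Lgen_mul_Lgen_eq_symGen_add hij hjn hin]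
  simp only [thirdForm, polyKernel, mul_add, trace_add, Matrix.mul_smul, trace_smul,
    LinearMap.add_apply, LinearMap.neg_apply, LinearMap.smul_apply, LinearMap.comp_apply,
    leval_apply, smul_eq_mul]
  ring

end SymmetrisedForms

section FormsAtRodrigues

open Matrix Polynomial

variable {n : Fin 3 → ℝ} (c s : ℝ) (i j k : Fin 3) (P : ℝ[X])

lemma trace_rodrigues_mul_symGen (hn : n ⬝ᵥ n = 1) :
    trace (rodrigues n c s * symGen i j) = (1 - c) * (n i * n j) - (1 + c) * (1 : Mat3) i j := by
  have hsymm : (1 : Mat3) j i = (1 : Mat3) i j :=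
    congrFun₂ (transpose_one (n := Fin 3) (α := ℝ)) i j
  rw [trace_mul_symGen, trace_rodrigues hn, rodrigues_apply, rodrigues_apply,
    crossMatrix_apply_swap n i j, hsymm]
  ring

lemma trace_Lgen_mul_rodrigues_mul_Lgen (hn : n ⬝ᵥ n = 1) :
    trace (Lgen k * rodrigues n c s * Lgen j) =
      (1 - c) * (n j * n k) - (1 + c) * (1 : Mat3) j k + s * crossMatrix n j k := by
  have hsymm : (1 : Mat3) j k = (1 : Mat3) k j :=
    congrFun₂ (transpose_one (n := Fin 3) (α := ℝ)) k j
  rw [Matrix.mul_assoc, trace_mul_comm, Matrix.mul_assoc, trace_mul_Lgen_mul_Lgen,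
    trace_rodrigues hn, rodrigues_apply, hsymm]
  ring

lemma trace_Lgen_mul_rodrigues_mul_symGen :
    trace (Lgen k * rodrigues n c s * symGen i j) =
      s * ((n i * (1 : Mat3) j k + n j * (1 : Mat3) i k) / 2 + n k * (1 : Mat3) i j)
        - (1 - c) / 2 * (n i * crossMatrix n j k + n j * crossMatrix n i k) := by
  have hsymm : ∀ a, (1 : Mat3) k a = (1 : Mat3) a k :=
    fun a => congrFun₂ (transpose_one (n := Fin 3) (α := ℝ)) a k
  rw [trace_mul_symGen, trace_Lgen_mul_rodrigues, Lgen_mul_rodrigues_symm, hsymm, hsymm]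
  ring

lemma secondForm_rodrigues (hn : n ⬝ᵥ n = 1) :
    secondForm (rodrigues n c s) i j P =
      n i * n j * (s ^ 2 * P.derivative.derivative.eval c + (1 - c) / 2 * P.derivative.eval c)
        - (1 + c) / 2 * (1 : Mat3) i j * P.derivative.eval c := by
  have hc : (trace (rodrigues n c s) - 1) / 2 = c := by rw [trace_rodrigues hn]; ring
  simp only [secondForm, hc, trace_rodrigues_mul_symGen _ _ _ _ hn,
    trace_mul_comm (rodrigues n c s) (Lgen _), trace_Lgen_mul_rodrigues, LinearMap.add_apply,
    LinearMap.smul_apply, LinearMap.comp_apply, leval_apply, smul_eq_mul]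
  ring

lemma thirdForm_rodrigues (hn : n ⬝ᵥ n = 1) :
    thirdForm (rodrigues n c s) i j k P =
      -(n i * n j * n k * (-(s ^ 3 * P.derivative.derivative.derivative.eval c)
          + 3 * (s * c * P.derivative.derivative.eval c) + s * P.derivative.eval c))
      + P.derivative.derivative.eval c * s *
        ((1 + c) / 2 * (3 * (n i * n j * n k)
            - ((1 : Mat3) i j * n k + (1 : Mat3) j k * n i + (1 : Mat3) i k * n j))
          + s * ((n i * crossMatrix n j k + n j * crossMatrix n i k) / 2))
      + P.derivative.eval c *
        (s * (n i * n j * n k - (((1 : Mat3) j k * n i + (1 : Mat3) i k * n j) / 2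
            + (1 : Mat3) i j * n k) / 2)
          + (1 - c) * ((n i * crossMatrix n j k + n j * crossMatrix n i k) / 4)) := by
  have hc : (trace (rodrigues n c s) - 1) / 2 = c := by rw [trace_rodrigues hn]; ring
  simp only [thirdForm, hc, trace_rodrigues_mul_symGen _ _ _ _ hn,
    trace_Lgen_mul_rodrigues_mul_Lgen _ _ _ _ hn,
    trace_mul_comm (rodrigues n c s) (Lgen _), trace_Lgen_mul_rodrigues_mul_symGen,
    trace_Lgen_mul_rodrigues, LinearMap.add_apply, LinearMap.neg_apply, LinearMap.smul_apply,
    LinearMap.comp_apply, leval_apply, smul_eq_mul]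
  ring

end FormsAtRodrigues

section ChebyshevDerivatives

open Polynomial Polynomial.Chebyshev

lemma hasDerivAt_eval_cos (P : ℝ[X]) (t : ℝ) :
    HasDerivAt (fun u => P.eval (Real.cos u))
      (P.derivative.eval (Real.cos t) * -Real.sin t) t :=
  (P.hasDerivAt _).comp t (Real.hasDerivAt_cos t)

lemma hasDerivAt_cos_mul (a t : ℝ) :
    HasDerivAt (fun u => Real.cos (a * u)) (-Real.sin (a * t) * a) t := by
  simpa only [mul_one] using ((hasDerivAt_id' t).const_mul a).cos

lemma hasDerivAt_sin_mul (a t : ℝ) :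
    HasDerivAt (fun u => Real.sin (a * u)) (Real.cos (a * t) * a) t := by
  simpa only [mul_one] using ((hasDerivAt_id' t).const_mul a).sin

variable (k : ℤ) (t : ℝ)

theorem mul_sin_eq_derivative_T :
    k * Real.sin (k * t) = Real.sin t * (T ℝ k).derivative.eval (Real.cos t) := by
  have h := hasDerivAt_eval_cos (T ℝ k) t
  simp only [T_real_cos] at h
  linarith [h.unique (hasDerivAt_cos_mul k t)]

theorem sq_mul_cos_eq_derivative_T :
    k ^ 2 * Real.cos (k * t) = Real.cos t * (T ℝ k).derivative.eval (Real.cos t)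
      - Real.sin t ^ 2 * (T ℝ k).derivative.derivative.eval (Real.cos t) := by
  have hprod := (Real.hasDerivAt_sin t).fun_mul (hasDerivAt_eval_cos (T ℝ k).derivative t)
  simp only [← mul_sin_eq_derivative_T] at hprod
  linear_combination ((hasDerivAt_sin_mul k t).const_mul (k : ℝ)).unique hprod

theorem cube_mul_sin_eq_derivative_T :
    k ^ 3 * Real.sin (k * t) =
      -(Real.sin t ^ 3 * (T ℝ k).derivative.derivative.derivative.eval (Real.cos t))
      + 3 * (Real.sin t * Real.cos t * (T ℝ k).derivative.derivative.eval (Real.cos t))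
      + Real.sin t * (T ℝ k).derivative.eval (Real.cos t) := by
  have hprod := ((Real.hasDerivAt_cos t).fun_mul (hasDerivAt_eval_cos (T ℝ k).derivative t)).fun_sub
    (((Real.hasDerivAt_sin t).fun_pow 2).fun_mul
      (hasDerivAt_eval_cos (T ℝ k).derivative.derivative t))
  simp only [← sq_mul_cos_eq_derivative_T] at hprod
  linear_combination -((hasDerivAt_cos_mul k t).const_mul ((k : ℝ) ^ 2)).unique hprod

theorem derivative_derivative_T_eval_one :
    (T ℝ k).derivative.derivative.eval 1 = ((k : ℝ) ^ 4 - k ^ 2) / 3 := by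
  have h := iterate_derivative_T_eval_one_eq_div (𝔽 := ℝ) k 2
  simp only [Function.iterate_succ, Function.iterate_zero, Function.comp_apply, id_eq,
    Finset.prod_range_succ, Finset.prod_range_zero] at h
  rw [h]
  push_cast
  ring

variable {c : ℝ}

theorem abs_derivative_T_le (hc : |c| ≤ 1) : |(T ℝ k).derivative.eval c| ≤ k ^ 2 := by
  have h := abs_iterate_derivative_T_real_le k 1 hc
  rwa [Function.iterate_one, derivative_T_eval_one] at h

theorem abs_derivative_derivative_T_le (hc : |c| ≤ 1) :
    |(T ℝ k).derivative.derivative.eval c| ≤ ((k : ℝ) ^ 4 - k ^ 2) / 3 := by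
  have h := abs_iterate_derivative_T_real_le k 2 hc
  rwa [← derivative_derivative_T_eval_one]

theorem sq_sub_derivative_T_le (hc : |c| ≤ 1) :
    k ^ 2 - (T ℝ k).derivative.eval c ≤ ((k : ℝ) ^ 4 - k ^ 2) / 3 * (1 - c) := by
  have h := (convex_Icc (-1 : ℝ) 1).image_sub_le_mul_sub_of_deriv_le
    (T ℝ k).derivative.continuousOn (T ℝ k).derivative.differentiable.differentiableOn
    (C := ((k : ℝ) ^ 4 - k ^ 2) / 3) ?_ c (abs_le.1 hc) 1 (by norm_num) (abs_le.1 hc).2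
  · rwa [derivative_T_eval_one] at h
  · intro u hu
    rw [Polynomial.deriv]
    exact (le_abs_self _).trans
      (abs_derivative_derivative_T_le k (abs_le.2 (Set.mem_Icc.1 (interior_subset hu))))

end ChebyshevDerivatives

section CoefficientBounds

open Matrix

lemma abs_mul_le_half {a b : ℝ} (h : a ^ 2 + b ^ 2 ≤ 1) : |a * b| ≤ 1 / 2 := by
  rw [abs_le]
  constructor <;> nlinarith [sq_nonneg (a + b), sq_nonneg (a - b)]

lemma abs_cube_add_abs_cube_sub_le {q : ℝ} (hq : |q| ≤ 1) : |q ^ 3| + |q ^ 3 - q| ≤ 1 := by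
  have hsq : q ^ 2 ≤ 1 := (sq_le_one_iff_abs_le_one q).2 hq
  have hsub : |q ^ 3 - q| = |q| * (1 - q ^ 2) := by
    rw [show q ^ 3 - q = -(q * (1 - q ^ 2)) by ring, abs_neg, abs_mul,
      abs_of_nonneg (sub_nonneg.2 hsq)]
  rw [hsub, abs_pow]
  linear_combination hq + |q| * sq_abs q

lemma abs_sq_mul_add_le {a q : ℝ} (h : a ^ 2 + q ^ 2 ≤ 1) :
    |a ^ 2 * q| + |a ^ 2 * q - q / 3| ≤ 1 := by
  have hq : |q| ≤ 1 - a ^ 2 / 2 := by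
    rw [abs_le]
    constructor <;> nlinarith [sq_nonneg (q + 1), sq_nonneg (q - 1)]
  rw [show a ^ 2 * q - q / 3 = (a ^ 2 - 1 / 3) * q by ring, abs_mul, abs_mul,
    abs_of_nonneg (sq_nonneg a)]
  rcases abs_cases (a ^ 2 - 1 / 3) with ⟨habs, hge⟩ | ⟨habs, -⟩
  · rw [habs]
    nlinarith [mul_le_mul_of_nonneg_left hq (by linarith : 0 ≤ 2 * a ^ 2 - 1 / 3),
      sq_nonneg (a ^ 2 - 13 / 12)]
  · rw [habs]
    nlinarith [sq_nonneg a]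

variable {n : Fin 3 → ℝ}

lemma sq_add_sq_le_one (hn : n ⬝ᵥ n = 1) {i j : Fin 3} (hij : i ≠ j) : n i ^ 2 + n j ^ 2 ≤ 1 := by
  have hsum : ∑ a, n a ^ 2 = 1 := by simpa only [dotProduct, ← pow_two] using hn
  rw [← Finset.sum_pair hij (f := fun a => n a ^ 2), ← hsum]
  exact Finset.sum_le_univ_sum_of_nonneg fun a => sq_nonneg (n a)

lemma abs_apply_le_one (hn : n ⬝ᵥ n = 1) (i : Fin 3) : |n i| ≤ 1 := by
  obtain ⟨j, hij⟩ := exists_ne i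
  exact (sq_le_one_iff_abs_le_one _).1
    (by linarith [sq_add_sq_le_one hn hij, sq_nonneg (n j)])

lemma sq_apply_add_sq_crossMatrix_apply_le (hn : n ⬝ᵥ n = 1) (i k : Fin 3) :
    n i ^ 2 + crossMatrix n i k ^ 2 ≤ 1 := by
  have hsum : n 0 ^ 2 + n 1 ^ 2 + n 2 ^ 2 = 1 := by
    rw [← hn, dotProduct, Fin.sum_univ_three]
    ring
  have h0 := sq_nonneg (n 0)
  have h1 := sq_nonneg (n 1)
  have h2 := sq_nonneg (n 2)
  rw [crossMatrix_eq]
  fin_cases i <;> fin_cases k <;>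
    simp only [Fin.zero_eta, Fin.mk_one, Fin.reduceFinMk, Matrix.of_apply, cons_val] <;>
    linarith

lemma abs_mul_crossMatrix_add_le (hn : n ⬝ᵥ n = 1) (i j k : Fin 3) :
    |n i * crossMatrix n j k + n j * crossMatrix n i k| ≤ 1 := by
  have hi := sq_apply_add_sq_crossMatrix_apply_le hn i k
  have hj := sq_apply_add_sq_crossMatrix_apply_le hn j k
  rw [abs_le]
  constructor <;> nlinarith [sq_nonneg (n i - crossMatrix n j k),
    sq_nonneg (n j - crossMatrix n i k), sq_nonneg (n i + crossMatrix n j k),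
    sq_nonneg (n j + crossMatrix n i k)]

lemma abs_mul_mul_add_abs_sub_le (hn : n ⬝ᵥ n = 1) (i j k : Fin 3) :
    |n i * n j * n k| + |n i * n j * n k
      - ((1 : Mat3) i j * n k + (1 : Mat3) j k * n i + (1 : Mat3) i k * n j) / 3| ≤ 1 := by
  have hpair : ∀ {a b : Fin 3}, a ≠ b →
      |n a ^ 2 * n b| + |n a ^ 2 * n b - n b / 3| ≤ 1 :=
    fun hab => abs_sq_mul_add_le (sq_add_sq_le_one hn hab)
  by_cases hij : i = j
  · subst hij
    by_cases hik : i = k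
    · subst hik
      simp only [one_apply_eq]
      convert abs_cube_add_abs_cube_sub_le (abs_apply_le_one hn i) using 3 <;> ring
    · simp only [one_apply_eq, one_apply_ne hik]
      convert hpair hik using 3 <;> ring
  by_cases hjk : j = k
  · subst hjk
    simp only [one_apply_eq, one_apply_ne hij]
    convert hpair (Ne.symm hij) using 3 <;> ring
  by_cases hik : i = k
  · subst hik
    simp only [one_apply_eq, one_apply_ne hij, one_apply_ne hjk]
    convert hpair hij using 3 <;> ring
  · have hmul := abs_mul_le_half (sq_add_sq_le_one hn hij)
    have hk := abs_apply_le_one hn k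
    simp only [one_apply_ne hij, one_apply_ne hjk, one_apply_ne hik, zero_mul, add_zero, zero_div,
      sub_zero]
    rw [abs_mul]
    nlinarith [abs_nonneg (n i * n j), abs_nonneg (n k)]

lemma abs_mul_mul_sub_le (hn : n ⬝ᵥ n = 1) (i j k : Fin 3) :
    |n i * n j * n k - (((1 : Mat3) j k * n i + (1 : Mat3) i k * n j) / 2
        + (1 : Mat3) i j * n k) / 2| ≤
      |n i * n j * n k
        - ((1 : Mat3) i j * n k + (1 : Mat3) j k * n i + (1 : Mat3) i k * n j) / 3| + 1 / 4 := by
  have hi := abs_le.1 (abs_apply_le_one hn i)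
  have hj := abs_le.1 (abs_apply_le_one hn j)
  have hk := abs_le.1 (abs_apply_le_one hn k)
  have hdiff : |((1 : Mat3) j k * n i + (1 : Mat3) i k * n j) / 12 - (1 : Mat3) i j * n k / 6|
      ≤ 1 / 4 := by
    simp only [one_apply]
    rw [abs_le]
    split_ifs <;> subst_vars <;> first | contradiction | constructor <;> linarith
  calc _ = |(n i * n j * n k
        - ((1 : Mat3) i j * n k + (1 : Mat3) j k * n i + (1 : Mat3) i k * n j) / 3)
        + (((1 : Mat3) j k * n i + (1 : Mat3) i k * n j) / 12 - (1 : Mat3) i j * n k / 6)| := by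
        ring_nf
    _ ≤ _ := (abs_add_le _ _).trans (by gcongr)

end CoefficientBounds

section FormBounds

open Matrix Polynomial Polynomial.Chebyshev

lemma one_sub_cos_le (t : ℝ) : 1 - Real.cos t ≤ t ^ 2 / 2 := by
  linarith [Real.one_sub_sq_div_two_le_cos (x := t)]

lemma intCast_sq_le_pow_four (k : ℤ) : (k : ℝ) ^ 2 ≤ (k : ℝ) ^ 4 := by
  have h : k ^ 2 ≤ (k ^ 2) ^ 2 := Int.le_self_sq _
  rw [← pow_mul] at h
  exact_mod_cast h

lemma abs_cube_mul_sin_le (k : ℤ) (t : ℝ) :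
    |(k : ℝ) ^ 3 * Real.sin (k * t)| ≤ (k : ℝ) ^ 4 * |t| := by
  calc |(k : ℝ) ^ 3 * Real.sin (k * t)| ≤ |(k : ℝ) ^ 3| * |k * t| := by
        rw [abs_mul]
        exact mul_le_mul_of_nonneg_left Real.abs_sin_le_abs (abs_nonneg _)
    _ = (k : ℝ) ^ 4 * |t| := by
        rw [← abs_mul, ← mul_assoc, ← pow_succ, abs_mul,
          abs_of_nonneg (Even.pow_nonneg (by decide) _)]

lemma abs_one_add_cos_div_two_mul_add_le (β : ℝ) {w : ℝ} (hw : |w| ≤ 1) (t : ℝ) :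
    |(1 + Real.cos t) / 2 * β + Real.sin t * (w / 2)| ≤ |β| + |t| / 2 := by
  have hcos : |(1 + Real.cos t) / 2| ≤ 1 := by
    rw [abs_le]
    constructor <;> linarith [Real.cos_le_one t, Real.neg_one_le_cos t]
  have hsin := Real.abs_sin_le_abs (x := t)
  calc _ ≤ |(1 + Real.cos t) / 2| * |β| + |Real.sin t| * (|w| / 2) := by
        refine (abs_add_le _ _).trans_eq ?_
        rw [abs_mul, abs_mul, abs_div w, abs_two]
    _ ≤ 1 * |β| + |t| * (1 / 2) := by
        gcongr
    _ = |β| + |t| / 2 := by ring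

lemma abs_sin_mul_add_le (κ : ℝ) {w : ℝ} (hw : |w| ≤ 1) (t : ℝ) :
    |Real.sin t * κ + (1 - Real.cos t) * (w / 4)| ≤ |t| * |κ| + t ^ 2 / 8 := by
  have hsin := Real.abs_sin_le_abs (x := t)
  calc _ ≤ |Real.sin t| * |κ| + (1 - Real.cos t) * (|w| / 4) := by
        refine (abs_add_le _ _).trans_eq ?_
        rw [abs_mul, abs_mul, abs_of_nonneg (sub_nonneg.2 (Real.cos_le_one t)), abs_div w,
          abs_of_pos (four_pos (α := ℝ))]
    _ ≤ |t| * |κ| + t ^ 2 / 2 * (1 / 4) := by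
        gcongr
        exact one_sub_cos_le t
    _ = |t| * |κ| + t ^ 2 / 8 := by ring

variable {n : Fin 3 → ℝ}

theorem abs_secondForm_rodrigues_self_add_sq_le (hn : n ⬝ᵥ n = 1) (t : ℝ) (k : ℤ) (i : Fin 3) :
    |secondForm (rodrigues n (Real.cos t) (Real.sin t)) i i (T ℝ k) + k ^ 2|
      ≤ (k : ℝ) ^ 4 * (t ^ 2 / 2) := by
  have hni := (sq_le_one_iff_abs_le_one _).2 (abs_apply_le_one hn i)
  have hsplit : secondForm (rodrigues n (Real.cos t) (Real.sin t)) i i (T ℝ k) + k ^ 2 =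
      n i ^ 2 * (k ^ 2 * (1 - Real.cos (k * t))) + (1 - n i ^ 2) *
        (k ^ 2 - (1 + Real.cos t) / 2 * (T ℝ k).derivative.eval (Real.cos t)) := by
    rw [secondForm_rodrigues _ _ _ _ _ hn, mul_one_sub, sq_mul_cos_eq_derivative_T, one_apply_eq]
    ring
  have hparallel : k ^ 2 * (1 - Real.cos (k * t)) ≤ (k : ℝ) ^ 4 * (t ^ 2 / 2) := by
    calc k ^ 2 * (1 - Real.cos (k * t)) ≤ (k : ℝ) ^ 2 * ((k * t) ^ 2 / 2) := by
          gcongr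
          exact one_sub_cos_le _
      _ = (k : ℝ) ^ 4 * (t ^ 2 / 2) := by ring
  have hT := abs_le.1 (abs_derivative_T_le k (Real.abs_cos_le_one t))
  have hcos := Real.cos_le_one t
  have hcos' := Real.neg_one_le_cos t
  have hnormal_nonneg :
      0 ≤ k ^ 2 - (1 + Real.cos t) / 2 * (T ℝ k).derivative.eval (Real.cos t) := by nlinarith
  have hnormal : k ^ 2 - (1 + Real.cos t) / 2 * (T ℝ k).derivative.eval (Real.cos t)
      ≤ (k : ℝ) ^ 4 * (t ^ 2 / 2) := by
    have hsub := sq_sub_derivative_T_le k (Real.abs_cos_le_one t)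
    calc _ = (1 + Real.cos t) / 2 * (k ^ 2 - (T ℝ k).derivative.eval (Real.cos t))
          + (1 - Real.cos t) / 2 * k ^ 2 := by ring
      _ ≤ (k : ℝ) ^ 4 * (1 - Real.cos t) := by nlinarith [intCast_sq_le_pow_four k]
      _ ≤ (k : ℝ) ^ 4 * (t ^ 2 / 2) := by
          gcongr
          exact one_sub_cos_le t
  have hparallel_nonneg : 0 ≤ k ^ 2 * (1 - Real.cos (k * t)) :=
    mul_nonneg (sq_nonneg _) (by linarith [Real.cos_le_one (k * t)])
  rw [hsplit, abs_of_nonneg (by nlinarith [sq_nonneg (n i)])]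
  nlinarith [sq_nonneg (n i)]

theorem abs_secondForm_rodrigues_le (hn : n ⬝ᵥ n = 1) (t : ℝ) (k : ℤ) {i j : Fin 3} (hij : i ≠ j) :
    |secondForm (rodrigues n (Real.cos t) (Real.sin t)) i j (T ℝ k)|
      ≤ (k : ℝ) ^ 4 * (t ^ 2 / 4) := by
  have hnn := abs_mul_le_half (sq_add_sq_le_one hn hij)
  have hk := intCast_sq_le_pow_four k
  have hsin : Real.sin t ^ 2 ≤ t ^ 2 := sq_le_sq.2 Real.abs_sin_le_abs
  have hbracket : |Real.sin t ^ 2 * (T ℝ k).derivative.derivative.eval (Real.cos t)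
      + (1 - Real.cos t) / 2 * (T ℝ k).derivative.eval (Real.cos t)|
      ≤ t ^ 2 * (((k : ℝ) ^ 4 - k ^ 2) / 3) + t ^ 2 / 2 / 2 * k ^ 2 := by
    have hcos : |(1 - Real.cos t) / 2| ≤ t ^ 2 / 2 / 2 := by
      rw [abs_of_nonneg (by linarith [Real.cos_le_one t])]
      linarith [one_sub_cos_le t]
    refine (abs_add_le _ _).trans ?_
    rw [abs_mul, abs_mul, abs_of_nonneg (sq_nonneg (Real.sin t))]
    gcongr
    · exact abs_derivative_derivative_T_le k (Real.abs_cos_le_one t)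
    · exact abs_derivative_T_le k (Real.abs_cos_le_one t)
  rw [secondForm_rodrigues _ _ _ _ _ hn, one_apply_ne hij, mul_zero, zero_mul, sub_zero, abs_mul]
  calc _ ≤ 1 / 2 * (t ^ 2 * (((k : ℝ) ^ 4 - k ^ 2) / 3) + t ^ 2 / 2 / 2 * k ^ 2) := by gcongr
    _ ≤ (k : ℝ) ^ 4 * (t ^ 2 / 4) := by
      nlinarith [mul_le_mul_of_nonneg_left hk (sq_nonneg t)]

theorem abs_thirdForm_rodrigues_le (hn : n ⬝ᵥ n = 1) (t : ℝ) (k : ℤ) (i j l : Fin 3) :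
    |thirdForm (rodrigues n (Real.cos t) (Real.sin t)) i j l (T ℝ k)|
      ≤ (k : ℝ) ^ 4 * (|t| + 1 / 4 * t ^ 2) + (k : ℝ) ^ 2 * (1 / 4 * |t|) := by
  rw [thirdForm_rodrigues _ _ _ _ _ _ hn, ← cube_mul_sin_eq_derivative_T]
  set p := n i * n j * n l
  set D := (1 : Mat3) i j * n l + (1 : Mat3) j l * n i + (1 : Mat3) i l * n j
  set E := ((1 : Mat3) j l * n i + (1 : Mat3) i l * n j) / 2 + (1 : Mat3) i j * n l
  set W := n i * crossMatrix n j l + n j * crossMatrix n i l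
  have hW : |W| ≤ 1 := abs_mul_crossMatrix_add_le hn i j l
  have hpD : |p| + |p - D / 3| ≤ 1 := abs_mul_mul_add_abs_sub_le hn i j l
  have hpE : |p - E / 2| ≤ |p - D / 3| + 1 / 4 := abs_mul_mul_sub_le hn i j l
  have hk := intCast_sq_le_pow_four k
  have hthird : |-(p * (k ^ 3 * Real.sin (k * t)))| ≤ |p| * ((k : ℝ) ^ 4 * |t|) := by
    rw [abs_neg, abs_mul]
    gcongr
    exact abs_cube_mul_sin_le k t
  have hsecond : |(T ℝ k).derivative.derivative.eval (Real.cos t) * Real.sin t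
      * ((1 + Real.cos t) / 2 * (3 * p - D) + Real.sin t * (W / 2))|
      ≤ ((k : ℝ) ^ 4 - k ^ 2) / 3 * |t| * (3 * |p - D / 3| + |t| / 2) := by
    have hsin := Real.abs_sin_le_abs (x := t)
    have hβ : |3 * p - D| = 3 * |p - D / 3| := by
      rw [show 3 * p - D = 3 * (p - D / 3) by ring, abs_mul, abs_of_pos three_pos]
    have hbracket := abs_one_add_cos_div_two_mul_add_le (3 * p - D) hW t
    rw [hβ] at hbracket
    rw [abs_mul, abs_mul]
    gcongr
    exact abs_derivative_derivative_T_le k (Real.abs_cos_le_one t)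
  have hfirst : |(T ℝ k).derivative.eval (Real.cos t)
      * (Real.sin t * (p - E / 2) + (1 - Real.cos t) * (W / 4))|
      ≤ k ^ 2 * (|t| * (|p - D / 3| + 1 / 4) + t ^ 2 / 8) := by
    rw [abs_mul]
    gcongr
    · exact abs_derivative_T_le k (Real.abs_cos_le_one t)
    · exact (abs_sin_mul_add_le (p - E / 2) hW t).trans (by gcongr)
  have hcoeff : (k : ℝ) ^ 4 * |t| * (|p| + |p - D / 3|) ≤ (k : ℝ) ^ 4 * |t| * 1 := by gcongr
  refine (abs_add_three _ _ _).trans ?_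
  nlinarith [mul_le_mul_of_nonneg_right hk (sq_nonneg t), sq_nonneg (k * t), sq_abs t]

end FormBounds

section CosineKernels

open Matrix Polynomial Polynomial.Chebyshev

/-- The zonal kernel with profile `t ↦ ∑ wₖ cos (k t)`. -/
noncomputable def cosKernel (I : Finset ℤ) (w : ℤ → ℝ) (x y : Mat3) : ℝ :=
  ∑ k ∈ I, w k * Real.cos (k * rotAngle (y⁻¹ * x))

/-- The polynomial whose value at `cos t` is `∑ wₖ cos (k t)`. -/
noncomputable def cosPoly (I : Finset ℤ) (w : ℤ → ℝ) : ℝ[X] := ∑ k ∈ I, w k • T ℝ k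

variable {I : Finset ℤ} {w : ℤ → ℝ}

lemma eval_cosPoly_cos (t : ℝ) :
    (cosPoly I w).eval (Real.cos t) = ∑ k ∈ I, w k * Real.cos (k * t) := by
  simp only [cosPoly, eval_finsetSum, eval_smul, T_real_cos, smul_eq_mul]

lemma map_cosPoly (φ : ℝ[X] →ₗ[ℝ] ℝ) : φ (cosPoly I w) = ∑ k ∈ I, w k * φ (T ℝ k) := by
  simp only [cosPoly, map_sum, map_smul, smul_eq_mul]

theorem cosKernel_eq_polyKernel {x y : Mat3} (hx : IsSO3 x) (hy : IsSO3 y) :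
    cosKernel I w x y = polyKernel (cosPoly I w) x y := by
  rw [cosKernel, ← eval_cosPoly_cos, hy.inv_eq, (hy.transpose.mul hx).cos_rotAngle, polyKernel]

lemma abs_sum_mul_le {f g : ℤ → ℝ} (hw : ∀ k ∈ I, 0 ≤ w k) (h : ∀ k, |f k| ≤ g k) :
    |∑ k ∈ I, w k * f k| ≤ ∑ k ∈ I, w k * g k := by
  refine (Finset.abs_sum_le_sum_abs _ _).trans (Finset.sum_le_sum fun k hk => ?_)
  rw [abs_mul, abs_of_nonneg (hw k hk)]
  exact mul_le_mul_of_nonneg_left (h k) (hw k hk)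

lemma rotAngle_nonneg (z : Mat3) : 0 ≤ rotAngle z := Real.arccos_nonneg _

theorem IsSO3.abs_secondForm_cosPoly_self_add_le {z : Mat3} (hz : IsSO3 z)
    (hw : ∀ k ∈ I, 0 ≤ w k) (i : Fin 3) :
    |secondForm z i i (cosPoly I w) + ∑ k ∈ I, w k * (k : ℝ) ^ 2|
      ≤ (∑ k ∈ I, w k * (k : ℝ) ^ 4) * (rotAngle z ^ 2 / 2) := by
  obtain ⟨n, hn, hz_eq⟩ := hz.exists_eq_rodrigues
  rw [map_cosPoly, ← Finset.sum_add_distrib, Finset.sum_mul]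
  simp only [← mul_add, mul_assoc]
  refine abs_sum_mul_le hw fun k => ?_
  have h := abs_secondForm_rodrigues_self_add_sq_le hn (rotAngle z) k i
  rwa [← hz_eq] at h

theorem IsSO3.abs_secondForm_cosPoly_le {z : Mat3} (hz : IsSO3 z)
    (hw : ∀ k ∈ I, 0 ≤ w k) {i j : Fin 3} (hij : i ≠ j) :
    |secondForm z i j (cosPoly I w)|
      ≤ (∑ k ∈ I, w k * (k : ℝ) ^ 4) * (rotAngle z ^ 2 / 4) := by
  obtain ⟨n, hn, hz_eq⟩ := hz.exists_eq_rodrigues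
  rw [map_cosPoly, Finset.sum_mul]
  simp only [mul_assoc]
  refine abs_sum_mul_le hw fun k => ?_
  have h := abs_secondForm_rodrigues_le hn (rotAngle z) k hij
  rwa [← hz_eq] at h

theorem IsSO3.abs_thirdForm_cosPoly_le {z : Mat3} (hz : IsSO3 z)
    (hw : ∀ k ∈ I, 0 ≤ w k) (i j l : Fin 3) :
    |thirdForm z i j l (cosPoly I w)|
      ≤ (∑ k ∈ I, w k * (k : ℝ) ^ 4) * (rotAngle z + 1 / 4 * rotAngle z ^ 2)
        + (∑ k ∈ I, w k * (k : ℝ) ^ 2) * (1 / 4 * rotAngle z) := by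
  obtain ⟨n, hn, hz_eq⟩ := hz.exists_eq_rodrigues
  rw [map_cosPoly, Finset.sum_mul, Finset.sum_mul, ← Finset.sum_add_distrib]
  simp only [mul_assoc, ← mul_add]
  refine abs_sum_mul_le hw fun k => ?_
  have h := abs_thirdForm_rodrigues_le hn (rotAngle z) k i j l
  rwa [← hz_eq, abs_of_nonneg (rotAngle_nonneg z)] at h

variable {x y : Mat3}

theorem abs_Xx_Xx_cosKernel_self_add_le (hw : ∀ k ∈ I, 0 ≤ w k) (hx : IsSO3 x) (hy : IsSO3 y)
    (i : Fin 3) :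
    |Xx i (Xx i (cosKernel I w)) x y + ∑ k ∈ I, w k * (k : ℝ) ^ 2|
      ≤ (∑ k ∈ I, w k * (k : ℝ) ^ 4) * (rotAngle (y⁻¹ * x) ^ 2 / 2) := by
  rw [Xx_congr (fun _ _ => Xx_congr (fun _ _ => cosKernel_eq_polyKernel) i) i hx hy,
    Xx_Xx_polyKernel_self, hy.inv_eq]
  exact (hy.transpose.mul hx).abs_secondForm_cosPoly_self_add_le hw i

theorem abs_Xx_Xx_Xy_cosKernel_self_le (hw : ∀ k ∈ I, 0 ≤ w k) (hx : IsSO3 x) (hy : IsSO3 y)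
    (i l : Fin 3) :
    |Xx i (Xx i (Xy l (cosKernel I w))) x y|
      ≤ (∑ k ∈ I, w k * (k : ℝ) ^ 4) * (rotAngle (y⁻¹ * x) + 1 / 4 * rotAngle (y⁻¹ * x) ^ 2)
        + (∑ k ∈ I, w k * (k : ℝ) ^ 2) * (1 / 4 * rotAngle (y⁻¹ * x)) := by
  rw [Xx_congr (fun _ _ => Xx_congr (fun _ _ => Xy_congr (fun _ _ => cosKernel_eq_polyKernel) l) i)
    i hx hy, Xx_Xx_Xy_polyKernel_self, hy.inv_eq]
  exact (hy.transpose.mul hx).abs_thirdForm_cosPoly_le hw i i l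

variable {i j n : Fin 3}

theorem abs_Xx_Xx_cosKernel_sub_le (hw : ∀ k ∈ I, 0 ≤ w k) (hx : IsSO3 x) (hy : IsSO3 y)
    (hij : i ≠ j) (hjn : j ≠ n) (hin : i ≠ n) :
    |Xx j (Xx i (cosKernel I w)) x y - eps3 j i n / 2 * Xx n (cosKernel I w) x y|
      ≤ (∑ k ∈ I, w k * (k : ℝ) ^ 4) * (rotAngle (y⁻¹ * x) ^ 2 / 4) := by
  rw [Xx_congr (fun _ _ => Xx_congr (fun _ _ => cosKernel_eq_polyKernel) i) j hx hy,
    Xx_congr (fun _ _ => cosKernel_eq_polyKernel) n hx hy,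
    Xx_Xx_polyKernel_sub _ _ _ hij hjn hin, hy.inv_eq]
  exact (hy.transpose.mul hx).abs_secondForm_cosPoly_le hw hij

theorem abs_Xx_Xx_Xy_cosKernel_sub_le (hw : ∀ k ∈ I, 0 ≤ w k) (hx : IsSO3 x) (hy : IsSO3 y)
    (hij : i ≠ j) (hjn : j ≠ n) (hin : i ≠ n) (l : Fin 3) :
    |Xx j (Xx i (Xy l (cosKernel I w))) x y
        - eps3 j i n / 2 * Xx n (Xy l (cosKernel I w)) x y|
      ≤ (∑ k ∈ I, w k * (k : ℝ) ^ 4) * (rotAngle (y⁻¹ * x) + 1 / 4 * rotAngle (y⁻¹ * x) ^ 2)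
        + (∑ k ∈ I, w k * (k : ℝ) ^ 2) * (1 / 4 * rotAngle (y⁻¹ * x)) := by
  rw [Xx_congr (fun _ _ => Xx_congr (fun _ _ => Xy_congr (fun _ _ => cosKernel_eq_polyKernel) l) i)
    j hx hy, Xx_congr (fun _ _ => Xy_congr (fun _ _ => cosKernel_eq_polyKernel) l) n hx hy,
    Xx_Xx_Xy_polyKernel_sub _ _ _ hij hjn hin, hy.inv_eq]
  exact (hy.transpose.mul hx).abs_thirdForm_cosPoly_le hw i j l

end CosineKernels

section SigmaKernel

/-- The Fourier weights of `σ̃_N`. -/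
noncomputable def sigmaWeight (s N : ℕ) (k : ℤ) : ℝ :=
  gtilde s ((k : ℝ) / (2 * ((N : ℝ) + 1))) / gnorm s N

theorem sigmaT_eq_sum (s N : ℕ) (t : ℝ) :
    sigmaT s N t = ∑ k ∈ Finset.Icc (-(N : ℤ)) N, sigmaWeight s N k * Real.cos (k * t) := by
  rw [sigmaT, Finset.mul_sum, Complex.re_sum]
  refine Finset.sum_congr rfl fun k _ => ?_
  calc _ = (((sigmaWeight s N k : ℝ) : ℂ) * Complex.exp (((k * t : ℝ) : ℂ) * Complex.I)).re := by
        rw [sigmaWeight]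
        push_cast
        ring_nf
    _ = sigmaWeight s N k * Real.cos (k * t) := by
        rw [Complex.re_ofReal_mul, Complex.exp_ofReal_mul_I_re]

theorem sigmaK_eq_cosKernel (s N : ℕ) :
    sigmaK s N = cosKernel (Finset.Icc (-(N : ℤ)) N) (sigmaWeight s N) :=
  funext₂ fun _ _ => sigmaT_eq_sum s N _

theorem iteratedDeriv_two_sum_mul_cos (I : Finset ℤ) (w : ℤ → ℝ) (t : ℝ) :
    iteratedDeriv 2 (fun u => ∑ k ∈ I, w k * Real.cos (k * u)) t =
      -∑ k ∈ I, w k * (k ^ 2 * Real.cos (k * t)) := by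
  have hfirst : deriv (fun u => ∑ k ∈ I, w k * Real.cos (k * u)) =
      fun u => ∑ k ∈ I, w k * (-Real.sin (k * u) * k) :=
    funext fun u => (HasDerivAt.fun_sum fun (k : ℤ) _ =>
      (hasDerivAt_cos_mul k u).const_mul (w k)).deriv
  rw [iteratedDeriv_succ, iteratedDeriv_one, hfirst, ← Finset.sum_neg_distrib]
  refine (HasDerivAt.fun_sum fun (k : ℤ) _ =>
    (((hasDerivAt_sin_mul k t).fun_neg.mul_const _).const_mul (w k))).deriv.trans
      (Finset.sum_congr rfl fun k _ => ?_)
  ring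

theorem iteratedDeriv_two_sigmaT (s N : ℕ) :
    iteratedDeriv 2 (sigmaT s N) 0 =
      -∑ k ∈ Finset.Icc (-(N : ℤ)) N, sigmaWeight s N k * (k : ℝ) ^ 2 := by
  rw [funext (sigmaT_eq_sum s N), iteratedDeriv_two_sum_mul_cos]
  simp only [mul_zero, Real.cos_zero, mul_one]

end SigmaKernel

section SplineRegularity

open Polynomial Polynomial.Chebyshev MeasureTheory

lemma measurable_sign : Measurable Real.sign :=
  measurable_const.ite measurableSet_Iio (measurable_const.ite measurableSet_Ioi measurable_const)

lemma continuousAt_sign {x : ℝ} (hx : x ≠ 0) : ContinuousAt Real.sign x := by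
  rcases hx.lt_or_gt with hneg | hpos
  · refine continuousAt_const.congr (f := fun _ => (-1 : ℝ)) ?_
    filter_upwards [Iio_mem_nhds hneg] with u hu using (Real.sign_of_neg hu).symm
  · refine continuousAt_const.congr (f := fun _ => (1 : ℝ)) ?_
    filter_upwards [Ioi_mem_nhds hpos] with u hu using (Real.sign_of_pos hu).symm

variable {s : ℕ}

lemma measurable_fspline_zero (s : ℕ) : Measurable (fspline s 0) :=
  (measurable_sign.comp (Polynomial.continuous _).measurable).const_mul _

lemma abs_fspline_zero_le_one (s : ℕ) (x : ℝ) : |fspline s 0 x| ≤ 1 := by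
  rw [fspline, abs_mul, abs_neg_one_pow, one_mul]
  rcases Real.sign_apply_eq ((U ℝ ((s : ℤ) - 1)).eval x) with h | h | h <;> norm_num [h]

lemma fspline_succ_neg_one (s k : ℕ) : fspline s (k + 1) (-1) = 0 :=
  intervalIntegral.integral_same

lemma intervalIntegrable_fspline (s k : ℕ) (a b : ℝ) :
    IntervalIntegrable (fspline s k) volume a b := by
  induction k generalizing a b with
  | zero =>
    exact (intervalIntegrable_const (c := (1 : ℝ))).mono_fun
      (measurable_fspline_zero s).aestronglyMeasurable
      (.of_forall fun x => by simpa using abs_fspline_zero_le_one s x)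
  | succ k ih => exact (intervalIntegral.continuous_primitive ih (-1)).intervalIntegrable a b

lemma continuous_fspline_succ (s k : ℕ) : Continuous (fspline s (k + 1)) :=
  intervalIntegral.continuous_primitive (intervalIntegrable_fspline s k) (-1)

lemma continuousAt_fspline (k : ℕ) {x : ℝ} (hx : (U ℝ ((s : ℤ) - 1)).eval x ≠ 0) :
    ContinuousAt (fspline s k) x := by
  cases k with
  | zero =>
    exact ((continuousAt_sign hx).comp (f := fun u => (U ℝ ((s : ℤ) - 1)).eval u)
      (Polynomial.continuousAt _)).const_mul _
  | succ k => exact (continuous_fspline_succ s k).continuousAt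

lemma stronglyMeasurable_fspline (s k : ℕ) : StronglyMeasurable (fspline s k) := by
  cases k with
  | zero => exact (measurable_fspline_zero s).stronglyMeasurable
  | succ k => exact (continuous_fspline_succ s k).stronglyMeasurable

lemma hasDerivAt_fspline_succ (k : ℕ) {x : ℝ} (hx : (U ℝ ((s : ℤ) - 1)).eval x ≠ 0) :
    HasDerivAt (fspline s (k + 1)) (fspline s k x) x :=
  intervalIntegral.integral_hasDerivAt_right (intervalIntegrable_fspline s k _ _)
    (stronglyMeasurable_fspline s k).stronglyMeasurableAtFilter (continuousAt_fspline k hx)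

lemma countable_setOf_eval_U_eq_zero (hs : s ≠ 0) :
    {x : ℝ | (U ℝ ((s : ℤ) - 1)).eval x = 0}.Countable :=
  (finite_setOfPred_isRoot (U_ne_zero ℝ _ (by omega))).countable

lemma sign_eval_U_cos {j : ℕ} {θ : ℝ} (hθ : 0 < Real.sin θ)
    (hmem : s * θ ∈ Set.Ioo (j * π) ((j + 1) * π)) :
    Real.sign ((U ℝ ((s : ℤ) - 1)).eval (Real.cos θ)) = (-1) ^ j := by
  have hU := U_real_cos θ ((s : ℤ) - 1)
  push_cast at hU
  have hsin : 0 < (-1) ^ j * (U ℝ ((s : ℤ) - 1)).eval (Real.cos θ) * Real.sin θ := by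
    rw [mul_assoc, hU, sub_add_cancel, ← Real.sin_sub_nat_mul_pi]
    exact Real.sin_pos_of_pos_of_lt_pi (by linarith [hmem.1]) (by linarith [hmem.2])
  have hpos := pos_of_mul_pos_left hsin hθ.le
  rcases neg_one_pow_eq_or ℝ j with h | h <;> rw [h] at hpos ⊢
  · exact Real.sign_of_pos (by linarith)
  · exact Real.sign_of_neg (by linarith)

lemma arccos_mem_Ioo_of_mem_Ioo_node {j : ℕ} (hj : j < s) {x : ℝ}
    (hx : x ∈ Set.Ioo (node s (j + 1)) (node s j)) :
    Real.arccos x ∈ Set.Ioo (j * π / s) ((j + 1) * π / s) := by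
  have hs : (0 : ℝ) < s := by exact_mod_cast j.zero_le.trans_lt hj
  have arccos_node : ∀ i ≤ s, Real.arccos (node s i) = i * π / s := fun i hi =>
    Real.arccos_cos (by positivity) <| by
      rw [div_le_iff₀ hs, mul_comm]
      gcongr
  have hright := Real.arccos_lt_arccos ((node_mem_Icc (n := s)).1.trans hx.1.le) hx.2
    node_mem_Icc.2
  have hleft := Real.arccos_lt_arccos (node_mem_Icc (n := s)).1 hx.1
    (hx.2.le.trans (node_mem_Icc (n := s)).2)
  rw [arccos_node j hj.le] at hright
  rw [arccos_node (j + 1) hj, Nat.cast_succ] at hleft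
  exact ⟨hright, hleft⟩

lemma fspline_zero_of_mem_Ioo_node {j : ℕ} (hj : j < s) {x : ℝ}
    (hx : x ∈ Set.Ioo (node s (j + 1)) (node s j)) : fspline s 0 x = (-1) ^ (s - 1 + j) := by
  have hs : (0 : ℝ) < s := by exact_mod_cast j.zero_le.trans_lt hj
  have hθ := arccos_mem_Ioo_of_mem_Ioo_node hj hx
  have hx_mem : x ∈ Set.Ioo (-1) 1 :=
    ⟨(node_mem_Icc (n := s)).1.trans_lt hx.1, hx.2.trans_le (node_mem_Icc (n := s)).2⟩
  have hsin : 0 < Real.sin (Real.arccos x) := by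
    rw [Real.sin_arccos, Real.sqrt_pos]
    nlinarith [hx_mem.1, hx_mem.2]
  rw [fspline, pow_add, ← sign_eval_U_cos (s := s) hsin
    ⟨(div_lt_iff₀' hs).1 hθ.1, (lt_div_iff₀' hs).1 hθ.2⟩, Real.cos_arccos hx_mem.1.le hx_mem.2.le]

variable {E : Type*} [NormedAddCommGroup E] [NormedSpace ℝ E] [CompleteSpace E]

theorem integral_fspline_succ_smul_deriv (hs : s ≠ 0) {k : ℕ} (hone : fspline s (k + 1) 1 = 0)
    {G G' : ℝ → E} (hG : ∀ x, HasDerivAt G (G' x) x) (hG' : Continuous G') :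
    ∫ x in (-1 : ℝ)..1, fspline s (k + 1) x • G' x = -∫ x in (-1 : ℝ)..1, fspline s k x • G x := by
  have hG_cont : Continuous G := continuous_iff_continuousAt.2 fun x => (hG x).continuousAt
  have hint_deriv : IntervalIntegrable (fun x => fspline s (k + 1) x • G' x) volume (-1) 1 :=
    ((continuous_fspline_succ s k).smul hG').intervalIntegrable _ _
  have hint : IntervalIntegrable (fun x => fspline s k x • G x) volume (-1) 1 :=
    (intervalIntegrable_fspline s k _ _).smul_continuousOn hG_cont.continuousOn
  have h := integral_eq_of_hasDerivAt_off_countable (fun x => fspline s (k + 1) x • G x) _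
    (countable_setOf_eval_U_eq_zero hs)
    ((continuous_fspline_succ s k).smul hG_cont).continuousOn
    (fun x hx => (hasDerivAt_fspline_succ k hx.2).smul (hG x)) (hint_deriv.add hint)
  rw [intervalIntegral.integral_add hint_deriv hint, hone, fspline_succ_neg_one, zero_smul,
    zero_smul, sub_zero] at h
  exact eq_neg_of_add_eq_zero_left h

theorem integral_fspline_zero_smul_deriv (hs : s ≠ 0)
    {H H' : ℝ → E} (hH : ∀ x, HasDerivAt H (H' x) x) (hH' : Continuous H') :
    ∫ x in (-1 : ℝ)..1, fspline s 0 x • H' x =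
      ∑ j ∈ Finset.range s, (-1 : ℝ) ^ (s - 1 + j) • (H (node s j) - H (node s (j + 1))) := by
  have hint : ∀ a b, IntervalIntegrable (fun x => fspline s 0 x • H' x) volume a b := fun a b =>
    (intervalIntegrable_fspline s 0 a b).smul_continuousOn hH'.continuousOn
  have hsum := intervalIntegral.sum_integral_adjacent_intervals (a := node s) (n := s)
    (μ := volume) (f := fun x => fspline s 0 x • H' x) fun _ _ => hint _ _
  rw [node_eq_one, node_eq_neg_one hs] at hsum
  rw [intervalIntegral.integral_symm, ← hsum, ← Finset.sum_neg_distrib]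
  refine Finset.sum_congr rfl fun j hj => ?_
  have hj := Finset.mem_range.1 hj
  rw [← intervalIntegral.integral_symm,
    intervalIntegral.integral_congr_Ioo_of_le (node_lt hj j.lt_succ_self).le
      (g := fun x => (-1 : ℝ) ^ (s - 1 + j) • H' x)
      (fun x hx => congrArg (· • H' x) (fspline_zero_of_mem_Ioo_node hj hx)),
    intervalIntegral.integral_smul, intervalIntegral.integral_eq_sub_of_hasDerivAt
      (fun x _ => hH x) (hH'.intervalIntegrable _ _)]

end SplineRegularity

section SplineMoments

open Polynomial.Chebyshev Finset

lemma sum_range_zpow_pow {K : Type*} [Field K] {ζ : K} {n : ℕ} (hζ : IsPrimitiveRoot ζ n)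
    (m : ℤ) : ∑ j ∈ range n, (ζ ^ m) ^ j = if (n : ℤ) ∣ m then (n : K) else 0 := by
  split_ifs with h
  · rw [(hζ.zpow_eq_one_iff_dvd m).2 h]
    simp only [one_pow, sum_const, card_range, nsmul_one]
  · rw [geom_sum_eq (mt (hζ.zpow_eq_one_iff_dvd m).1 h), ← zpow_natCast, ← zpow_mul, mul_comm m,
      zpow_mul, zpow_natCast, hζ.pow_eq_one, one_zpow, sub_self, zero_div]

lemma add_inv_pow {K : Type*} [Field K] {z : K} (hz : z ≠ 0) (q : ℕ) :
    (z + z⁻¹) ^ q = ∑ r ∈ range (q + 1), (q.choose r : K) * z ^ (2 * r - q : ℤ) := by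
  rw [add_pow]
  refine sum_congr rfl fun r hr => ?_
  have hr : r ≤ q := Nat.lt_succ_iff.1 (mem_range.1 hr)
  rw [inv_pow, ← zpow_natCast, ← zpow_natCast z (q - r), ← zpow_neg, ← zpow_add₀ hz, mul_comm,
    Nat.cast_sub hr]
  ring_nf

variable {s : ℕ}

lemma node_eq_add_inv (hs : s ≠ 0) (j : ℕ) :
    (node s j : ℂ) = (Complex.exp (2 * π * Complex.I / (2 * s : ℕ)) ^ j +
      (Complex.exp (2 * π * Complex.I / (2 * s : ℕ)) ^ j)⁻¹) / 2 := by
  have hs' : (s : ℂ) ≠ 0 := Nat.cast_ne_zero.2 hs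
  rw [node, Complex.ofReal_cos, Complex.cos, ← Complex.exp_nat_mul, ← Complex.exp_neg]
  congr 3 <;> push_cast <;> field_simp

lemma exp_two_pi_mul_I_div_two_mul_pow (hs : s ≠ 0) :
    Complex.exp (2 * π * Complex.I / (2 * s : ℕ)) ^ s = -1 := by
  have hs' : (s : ℂ) ≠ 0 := Nat.cast_ne_zero.2 hs
  rw [← Complex.exp_nat_mul, ← Complex.exp_pi_mul_I]
  congr 1
  push_cast
  field_simp

theorem sum_neg_one_pow_mul_node_pow (hs : s ≠ 0) (q : ℕ) :
    ∑ j ∈ range (2 * s), (-1 : ℝ) ^ j * node s j ^ q =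
      (2 * s) / 2 ^ q * ∑ r ∈ range (q + 1),
        if (2 * s : ℤ) ∣ s + 2 * r - q then (q.choose r : ℝ) else 0 := by
  have hζ := Complex.isPrimitiveRoot_exp (2 * s) (by omega)
  have hnode := node_eq_add_inv hs
  have hζs := exp_two_pi_mul_I_div_two_mul_pow hs
  generalize Complex.exp (2 * π * Complex.I / (2 * s : ℕ)) = ζ at hζ hnode hζs
  have hζ0 : ζ ≠ 0 := hζ.ne_zero (by omega)
  have hterm : ∀ j, (-1 : ℂ) ^ j * (node s j : ℂ) ^ q = ∑ r ∈ range (q + 1),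
      (q.choose r : ℂ) / 2 ^ q * (ζ ^ ((s : ℤ) + 2 * r - q)) ^ j := by
    intro j
    rw [hnode, div_pow, add_inv_pow (pow_ne_zero j hζ0), ← hζs, sum_div, mul_sum]
    refine sum_congr rfl fun r _ => ?_
    have hcomm : (ζ ^ j) ^ (2 * r - q : ℤ) = (ζ ^ (2 * r - q : ℤ)) ^ j := by
      rw [← zpow_natCast, ← zpow_natCast, zpow_comm]
    rw [add_sub_assoc, zpow_add₀ hζ0, zpow_natCast, mul_pow, hcomm]
    ring
  rw [← Complex.ofReal_inj]
  push_cast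
  simp_rw [hterm]
  rw [sum_comm, mul_sum]
  refine sum_congr rfl fun r _ => ?_
  rw [← mul_sum, sum_range_zpow_pow hζ, Nat.cast_mul, Nat.cast_ofNat]
  split_ifs <;> push_cast <;> ring

lemma node_two_mul_sub (hs : s ≠ 0) {j : ℕ} (hj : j ≤ 2 * s) :
    node s (2 * s - j) = node s j := by
  have hs' : (s : ℝ) ≠ 0 := Nat.cast_ne_zero.2 hs
  rw [node, node, ← Real.cos_two_pi_sub]
  congr 1
  push_cast [hj]
  field_simp
  ring

/-- The alternating sum of the increments of `x ^ q` between consecutive extremal points of the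
Chebyshev polynomial `T s`: up to a factor, the moment of a spline of the chain. -/
noncomputable def altSum (s q : ℕ) : ℝ :=
  ∑ j ∈ range s, (-1 : ℝ) ^ j * (node s j ^ q - node s (j + 1) ^ q)

lemma altSum_eq_sum_range_two_mul (hs : s ≠ 0) (q : ℕ) :
    altSum s q = ∑ j ∈ range (2 * s), (-1 : ℝ) ^ j * node s j ^ q := by
  have hreflect : ∑ j ∈ range s, (-1 : ℝ) ^ (s + j) * node s (s + j) ^ q =
      ∑ j ∈ range s, (-1 : ℝ) ^ (j + 1) * node s (j + 1) ^ q := by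
    rw [← sum_range_reflect]
    refine sum_congr rfl fun j hj => ?_
    have hj := mem_range.1 hj
    rw [show s + (s - 1 - j) = 2 * s - (j + 1) by omega, node_two_mul_sub hs (by omega),
      neg_one_pow_congr (show Even (2 * s - (j + 1)) ↔ Even (j + 1) by grind)]
  rw [two_mul, sum_range_add, hreflect, altSum, ← sum_add_distrib]
  exact sum_congr rfl fun j _ => by ring

theorem altSum_eq_zero {q : ℕ} (hq : q < s) : altSum s q = 0 := by
  have hs : s ≠ 0 := by omega
  rw [altSum_eq_sum_range_two_mul hs, sum_neg_one_pow_mul_node_pow hs, sum_eq_zero, mul_zero]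
  intro r hr
  have hr := mem_range.1 hr
  exact if_neg fun hdvd => by linarith [Int.le_of_dvd (by omega) hdvd]

lemma two_mul_dvd_iff {a r : ℕ} (ha : a < s) (hr : r ≤ s + 2 * a) :
    (2 * s : ℤ) ∣ s + 2 * r - (s + 2 * a : ℕ) ↔ r = a ∨ r = a + s := by
  rw [show (s + 2 * r - (s + 2 * a : ℕ) : ℤ) = 2 * (r - a) by push_cast; ring,
    mul_dvd_mul_iff_left two_ne_zero]
  constructor
  · rintro ⟨c, hc⟩
    obtain rfl | rfl : c = 0 ∨ c = 1 := by
      have : -1 < c := by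
        by_contra! h
        nlinarith
      have : c < 2 := by
        by_contra! h
        nlinarith
      omega
    · left; omega
    · right; omega
  · rintro (rfl | rfl) <;> simp

theorem altSum_add_two_mul {a : ℕ} (ha : a < s) :
    altSum s (s + 2 * a) = 4 * s / 2 ^ (s + 2 * a) * (s + 2 * a).choose a := by
  have hs : s ≠ 0 := by omega
  have hfilter : {r ∈ range (s + 2 * a + 1) | (2 * s : ℤ) ∣ s + 2 * (r : ℕ) - (s + 2 * a : ℕ)} =
      {a, a + s} := by
    ext r
    simp only [mem_filter, mem_range, mem_insert, mem_singleton]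
    constructor
    · exact fun ⟨hr, hdvd⟩ => (two_mul_dvd_iff ha (Nat.lt_succ_iff.1 hr)).1 hdvd
    · exact fun hr => ⟨by omega, (two_mul_dvd_iff ha (by omega)).2 hr⟩
  rw [altSum_eq_sum_range_two_mul hs, sum_neg_one_pow_mul_node_pow hs, ← sum_filter, hfilter,
    sum_pair (by omega), Nat.choose_symm_of_eq_add (show s + 2 * a = a + s + a by ring)]
  ring

lemma hasDerivAt_pow_succ_div (m : ℕ) (x : ℝ) :
    HasDerivAt (fun u : ℝ => u ^ (m + 1) / (m + 1)) (x ^ m) x := by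
  refine ((hasDerivAt_pow (m + 1) x).div_const ((m : ℝ) + 1)).congr_deriv ?_
  rw [Nat.cast_succ, Nat.add_sub_cancel, mul_div_cancel_left₀ _ m.cast_add_one_ne_zero]

lemma integral_fspline_zero_mul_pow (hs_even : Even s) (hs : s ≠ 0) (m : ℕ) :
    ∫ x in (-1 : ℝ)..1, fspline s 0 x * x ^ m = -(altSum s (m + 1) / (m + 1)) := by
  have h := integral_fspline_zero_smul_deriv hs (hasDerivAt_pow_succ_div m) (by fun_prop)
  simp only [smul_eq_mul] at h
  rw [h, altSum, sum_div, ← sum_neg_distrib]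
  refine sum_congr rfl fun j _ => ?_
  have hodd : Odd (s - 1) := by grind
  rw [pow_add, hodd.neg_one_pow]
  ring

lemma integral_fspline_succ_mul_pow (hs : s ≠ 0) {k : ℕ} (hone : fspline s (k + 1) 1 = 0)
    (m : ℕ) : ∫ x in (-1 : ℝ)..1, fspline s (k + 1) x * x ^ m =
      -((∫ x in (-1 : ℝ)..1, fspline s k x * x ^ (m + 1)) / (m + 1)) := by
  have h := integral_fspline_succ_smul_deriv hs hone (hasDerivAt_pow_succ_div m) (by fun_prop)
  simpa only [smul_eq_mul, mul_div_assoc', intervalIntegral.integral_div] using h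

theorem integral_fspline_mul_pow (hs_even : Even s) {k : ℕ} (hk : k < s) (m : ℕ) :
    ∫ x in (-1 : ℝ)..1, fspline s k x * x ^ m =
      (-1) ^ (k + 1) * (m.factorial / (m + k + 1).factorial) * altSum s (m + k + 1) := by
  have hs : s ≠ 0 := by omega
  induction k generalizing m with
  | zero =>
    rw [integral_fspline_zero_mul_pow hs_even hs, add_zero, Nat.factorial_succ]
    push_cast
    field_simp
  | succ k ih =>
    have hone : fspline s (k + 1) 1 = 0 := by
      have hmoment := ih (by omega) 0
      rw [altSum_eq_zero (by omega), mul_zero] at hmoment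
      simp only [pow_zero, mul_one] at hmoment
      exact hmoment
    rw [integral_fspline_succ_mul_pow hs hone, ih (by omega),
      show m + 1 + k + 1 = m + (k + 1) + 1 by ring, Nat.factorial_succ m]
    push_cast
    field_simp
    ring

theorem fspline_succ_one (hs_even : Even s) {k : ℕ} (hk : k + 1 < s) :
    fspline s (k + 1) 1 = 0 := by
  have hmoment := integral_fspline_mul_pow hs_even (show k < s by omega) 0
  rw [altSum_eq_zero (by omega), mul_zero] at hmoment
  simp only [pow_zero, mul_one] at hmoment
  exact hmoment

/-- The moments of the perfect B-spline of order `s - 1`. -/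
noncomputable def splineMoment (s m : ℕ) : ℝ := ∫ x in (-1 : ℝ)..1, fspline s (s - 1) x * x ^ m

theorem splineMoment_two_mul (hs_even : Even s) {a : ℕ} (ha : a < s) :
    splineMoment s (2 * a) = (2 * a).factorial / (s + 2 * a).factorial *
      (4 * s / 2 ^ (s + 2 * a) * (s + 2 * a).choose a) := by
  rw [splineMoment, integral_fspline_mul_pow hs_even (by omega),
    show 2 * a + (s - 1) + 1 = s + 2 * a by omega, show s - 1 + 1 = s by omega,
    hs_even.neg_one_pow, one_mul, altSum_add_two_mul ha]

lemma splineMoment_zero (hs_even : Even s) (hs : s ≠ 0) :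
    splineMoment s 0 = 4 * s / (2 ^ s * s.factorial) := by
  have h := splineMoment_two_mul hs_even (a := 0) (by omega)
  simp only [mul_zero, add_zero, Nat.factorial_zero, Nat.choose_zero_right] at h
  rw [h, Nat.cast_one]
  field_simp

lemma splineMoment_two (hs_even : Even s) (hs : 2 ≤ s) :
    splineMoment s 2 = splineMoment s 0 * (1 / (2 * (s + 1))) := by
  have h := splineMoment_two_mul hs_even (a := 1) (by omega)
  simp only [mul_one, Nat.choose_one_right, Nat.factorial_succ] at h
  rw [h, splineMoment_zero hs_even (by omega)]
  push_cast
  field_simp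
  ring

lemma splineMoment_four (hs_even : Even s) (hs : 3 ≤ s) :
    splineMoment s 4 = splineMoment s 0 * (3 / (4 * (s + 2) * (s + 1))) := by
  have h := splineMoment_two_mul hs_even (a := 2) (by omega)
  simp only [Nat.reduceMul, Nat.factorial_succ, Nat.cast_choose_two] at h
  rw [h, splineMoment_zero hs_even (by omega)]
  push_cast
  field_simp
  ring

end SplineMoments

section SplineNonneg

open Polynomial MeasureTheory

/-- `f` takes `m + 1` alternating nonzero values inside `(-1, 1)`, starting with a negative one;
only the values `p 0, …, p m` of the sequence of points matter. -/
def HasAlternation (f : ℝ → ℝ) (m : ℕ) : Prop :=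
  ∃ p : ℕ → ℝ, (∀ i < m, p i < p (i + 1)) ∧ -1 < p 0 ∧ p m < 1 ∧
    ∀ i ≤ m, 0 < (-1) ^ (i + 1) * f (p i)

lemma exists_mem_Ioo_pos_of_integral_pos {f : ℝ → ℝ} {a b : ℝ} (hab : a < b)
    (hf : IntervalIntegrable f volume a b) (h : 0 < ∫ x in a..b, f x) :
    ∃ x ∈ Set.Ioo a b, 0 < f x := by
  by_contra! hneg
  have hle := intervalIntegral.integral_mono_on_of_le_Ioo hab.le hf intervalIntegrable_const hneg
  rw [intervalIntegral.integral_zero] at hle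
  exact h.not_ge hle

lemma exists_alternating_of_integral {f : ℝ → ℝ} (hf : ∀ a b, IntervalIntegrable f volume a b)
    {n : ℕ} {e : ℕ → ℝ} (he : ∀ i < n, e i < e (i + 1))
    (hint : ∀ i < n, 0 < (-1) ^ (i + 1) * ∫ x in e i..e (i + 1), f x) :
    ∃ q : ℕ → ℝ, ∀ i < n, q i ∈ Set.Ioo (e i) (e (i + 1)) ∧ 0 < (-1) ^ (i + 1) * f (q i) := by
  have hpoint : ∀ i, ∃ q, i < n → q ∈ Set.Ioo (e i) (e (i + 1)) ∧ 0 < (-1) ^ (i + 1) * f q := by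
    intro i
    by_cases hi : i < n
    · have hpos := hint i hi
      rw [← intervalIntegral.integral_const_mul] at hpos
      obtain ⟨q, hq⟩ := exists_mem_Ioo_pos_of_integral_pos (he i hi) ((hf _ _).const_mul _) hpos
      exact ⟨q, fun _ => hq⟩
    · exact ⟨0, fun h => absurd h hi⟩
  choose q hq using hpoint
  exact ⟨q, hq⟩

lemma HasAlternation.exists_increments {F : ℝ → ℝ} {m : ℕ} (h : HasAlternation F m)
    (hneg : F (-1) = 0) (hone : F 1 = 0) :
    ∃ e : ℕ → ℝ, e 0 = -1 ∧ e (m + 2) = 1 ∧ (∀ i < m + 2, e i < e (i + 1)) ∧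
      ∀ i < m + 2, 0 < (-1) ^ (i + 1) * (F (e (i + 1)) - F (e i)) := by
  obtain ⟨p, hp, hp0, hpm, hval⟩ := h
  let e : ℕ → ℝ := fun i => if i = 0 then -1 else if i ≤ m + 1 then p (i - 1) else 1
  have he0 : e 0 = -1 := if_pos rfl
  have hep : ∀ i ≤ m, e (i + 1) = p i := fun i hi => by simp [e, hi]
  have hem : e (m + 2) = 1 := by simp [e]
  have hpos : ∀ i ≤ m, 0 < (-1) ^ (i + 1) * F (e (i + 1)) := fun i hi => hep i hi ▸ hval i hi
  refine ⟨e, he0, hem, fun i hi => ?_, fun i hi => ?_⟩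
  · rcases i with _ | i
    · rwa [he0, hep 0 (by omega)]
    · rcases (show i ≤ m by omega).eq_or_lt with rfl | hlt
      · rwa [hem, hep i le_rfl]
      · rw [hep i hlt.le, hep (i + 1) hlt]
        exact hp i hlt
  · have hright : 0 ≤ (-1) ^ (i + 1) * F (e (i + 1)) := by
      rcases (show i ≤ m + 1 by omega).eq_or_lt with rfl | hlt
      · rw [hem, hone, mul_zero]
      · exact (hpos i (by omega)).le
    rcases i with _ | i
    · rw [he0, hneg, sub_zero]
      exact hpos 0 (by omega)
    · have hleft := hpos i (by omega)
      rw [pow_succ] at hright ⊢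
      linarith

lemma HasAlternation.of_primitive {f F : ℝ → ℝ} {m : ℕ} (h : HasAlternation F m)
    (hf : ∀ a b, IntervalIntegrable f volume a b) (hF : ∀ a b, ∫ x in a..b, f x = F b - F a)
    (hneg : F (-1) = 0) (hone : F 1 = 0) : HasAlternation f (m + 1) := by
  obtain ⟨e, he0, hem, he, hincr⟩ := h.exists_increments hneg hone
  obtain ⟨q, hq⟩ := exists_alternating_of_integral hf he (by simpa only [hF] using hincr)
  refine ⟨q, fun i hi => ?_, ?_, ?_, fun i hi => (hq i (by omega)).2⟩
  · exact (hq i (by omega)).1.2.trans (hq (i + 1) (by omega)).1.1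
  · exact he0 ▸ (hq 0 (by omega)).1.1
  · exact hem ▸ (hq (m + 1) (by omega)).1.2

lemma lt_natDegree_of_alternating {P : ℝ[X]} {n : ℕ} {e : ℕ → ℝ}
    (he : ∀ i ≤ n, e i < e (i + 1)) (hP : ∀ i ≤ n + 1, 0 < (-1) ^ (i + 1) * P.eval (e i)) :
    n < P.natDegree := by
  have hP0 : P ≠ 0 := by
    rintro rfl
    simpa using hP 0 (by omega)
  have hroot : ∀ i : Fin (n + 1), ∃ r ∈ Set.Ioo (e i) (e (i + 1)), P.eval r = 0 := by
    intro i
    have hi : (i : ℕ) ≤ n := by omega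
    have hcont : ContinuousOn (fun x => (-1) ^ ((i : ℕ) + 1) * P.eval x)
        (Set.Icc (e i) (e (i + 1))) := by fun_prop
    have hright := hP (i + 1) (by omega)
    rw [pow_succ] at hright
    obtain ⟨r, hr, hr0⟩ := intermediate_value_Ioo' (he i hi).le hcont
      (show (0 : ℝ) ∈ _ from ⟨by linarith, hP i (by omega)⟩)
    exact ⟨r, hr, by simpa using hr0⟩
  choose r hr hr0 using hroot
  have hmono : StrictMono r := Fin.strictMono_iff_lt_succ.2 fun i =>
    (hr i.castSucc).2.trans (by simpa using (hr i.succ).1)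
  have hcard := card_le_degree_of_subset_roots (p := P) (Z := Finset.univ.image r) fun x hx => by
    obtain ⟨i, -, rfl⟩ := Finset.mem_image.1 (Finset.mem_def.2 hx)
    exact (mem_roots hP0).2 (hr0 i)
  rw [Finset.card_image_of_injective _ hmono.injective, Finset.card_univ,
    Fintype.card_fin] at hcard
  omega

variable {s : ℕ}

lemma HasAlternation.fspline_zero (hs_even : Even s) {k m : ℕ} (hk : k < s)
    (h : HasAlternation (fspline s k) m) : HasAlternation (fspline s 0) (m + k) := by
  induction k generalizing m with
  | zero => exact h
  | succ k ih =>
    have hint := intervalIntegrable_fspline s k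
    have hprev := h.of_primitive hint
      (fun a b => (intervalIntegral.integral_interval_sub_left (hint (-1) b) (hint (-1) a)).symm)
      (fspline_succ_neg_one s k) (fspline_succ_one hs_even hk)
    rw [← add_assoc, add_right_comm]
    exact ih (by omega) hprev

lemma eval_U_neg_one_neg (hs_even : Even s) (hs : s ≠ 0) :
    (Chebyshev.U ℝ ((s : ℤ) - 1)).eval (-1) < 0 := by
  have hodd : Odd ((s : ℤ) - 1) := Even.sub_odd (mod_cast hs_even) odd_one
  have hpos : (0 : ℝ) < s := by positivity
  rw [Chebyshev.U_eval_neg_one, Int.negOnePow_odd _ hodd]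
  push_cast
  linarith

lemma pos_eval_U_of_pos_fspline_zero (hs_even : Even s) (hs : s ≠ 0) {i : ℕ} {x : ℝ}
    (h : 0 < (-1) ^ (i + 1) * fspline s 0 x) :
    0 < (-1) ^ i * (Chebyshev.U ℝ ((s : ℤ) - 1)).eval x := by
  have hodd : Odd (s - 1) := by grind
  simp only [fspline, hodd.neg_one_pow, pow_succ] at h
  rcases lt_trichotomy ((Chebyshev.U ℝ ((s : ℤ) - 1)).eval x) 0 with hu | hu | hu
  · rw [Real.sign_of_neg hu] at h
    nlinarith
  · simp [hu] at h
  · rw [Real.sign_of_pos hu] at h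
    nlinarith

/-- A negative value of the spline produces `s` alternations of `f₀`, hence of `U_{s-1}`; together
with the sign of `U_{s-1}` at `-1` this is one more than its degree allows. -/
theorem fspline_nonneg (hs_even : Even s) (hs : s ≠ 0) {t : ℝ} (ht : t ∈ Set.Ioo (-1 : ℝ) 1) :
    0 ≤ fspline s (s - 1) t := by
  by_contra! hneg
  have halt : HasAlternation (fspline s (s - 1)) 0 :=
    ⟨fun _ => t, fun i hi => absurd hi i.not_lt_zero, ht.1, ht.2, fun i hi => by
      simpa [Nat.le_zero.1 hi] using hneg⟩
  obtain ⟨p, hp, hp0, -, hval⟩ := halt.fspline_zero hs_even (by omega)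
  rw [zero_add] at hp hval
  have hdeg := lt_natDegree_of_alternating (P := Chebyshev.U ℝ ((s : ℤ) - 1)) (n := s - 1)
    (e := fun i => if i = 0 then -1 else p (i - 1))
    (fun i hi => by
      rcases i with _ | i
      · simpa using hp0
      · simpa using hp i (by omega))
    (fun i hi => by
      rcases i with _ | i
      · simpa using eval_U_neg_one_neg hs_even hs
      · simpa [pow_succ] using
          pos_eval_U_of_pos_fspline_zero hs_even hs (hval i (by omega)))
  rw [Chebyshev.natDegree_U] at hdeg
  omega

end SplineNonneg

section SplineFourier

open MeasureTheory Polynomial.Chebyshev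

/-- The function `x ↦ e^{-iξx} x ^ m`, against which the splines are integrated to obtain the
Fourier transforms of their products with monomials. -/
noncomputable def waveMonomial (ξ : ℝ) (m : ℕ) (x : ℝ) : ℂ :=
  Complex.exp ((-ξ * x : ℝ) * Complex.I) * (x : ℂ) ^ m

lemma norm_waveMonomial_le_one (ξ : ℝ) (m : ℕ) {x : ℝ} (hx : |x| ≤ 1) :
    ‖waveMonomial ξ m x‖ ≤ 1 := by
  rw [waveMonomial, norm_mul, Complex.norm_exp_ofReal_mul_I, one_mul, norm_pow, Complex.norm_real,
    Real.norm_eq_abs]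
  exact pow_le_one₀ (abs_nonneg x) hx

@[fun_prop]
lemma continuous_waveMonomial (ξ : ℝ) (m : ℕ) : Continuous (waveMonomial ξ m) := by
  unfold waveMonomial
  fun_prop

lemma hasDerivAt_waveMonomial (ξ : ℝ) (m : ℕ) (x : ℝ) :
    HasDerivAt (waveMonomial ξ m)
      (m * waveMonomial ξ (m - 1) x - ξ * Complex.I * waveMonomial ξ m x) x := by
  have hphase : HasDerivAt (fun x : ℝ => ((-ξ * x : ℝ) : ℂ) * Complex.I)
      (((-ξ * 1 : ℝ) : ℂ) * Complex.I) x :=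
    ((hasDerivAt_id x).const_mul (-ξ)).ofReal_comp.mul_const _
  have hpow : HasDerivAt (fun x : ℝ => (x : ℂ) ^ m) ((m : ℂ) * (x : ℂ) ^ (m - 1)) x := by
    simpa using (hasDerivAt_pow m (x : ℂ)).comp_ofReal
  refine (hphase.cexp.mul hpow).congr_deriv ?_
  simp only [waveMonomial]
  push_cast
  ring

/-- The Fourier transform of `x ^ m` times the spline of index `k` of the chain. -/
noncomputable def splineFourier (s k m : ℕ) (ξ : ℝ) : ℂ :=
  ∫ x in (-1 : ℝ)..1, fspline s k x • waveMonomial ξ m x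

lemma integral_fspline_smul_deriv_waveMonomial (s k m : ℕ) (ξ : ℝ) :
    ∫ x in (-1 : ℝ)..1, fspline s k x •
      (m * waveMonomial ξ (m - 1) x - ξ * Complex.I * waveMonomial ξ m x) =
      m * splineFourier s k (m - 1) ξ - ξ * Complex.I * splineFourier s k m ξ := by
  have hint : ∀ m, IntervalIntegrable (fun x => fspline s k x • waveMonomial ξ m x)
      volume (-1) 1 := fun m =>
    (intervalIntegrable_fspline s k _ _).smul_continuousOn (by fun_prop)
  rw [splineFourier, splineFourier, ← intervalIntegral.integral_const_mul,
    ← intervalIntegral.integral_const_mul,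
    ← intervalIntegral.integral_sub ((hint _).const_mul _) ((hint _).const_mul _)]
  simp only [smul_sub, mul_smul_comm]

lemma norm_mul_abs_le_of_sub_eq {a b c : ℂ} {ξ : ℝ} {m : ℕ}
    (h : m * a - ξ * Complex.I * b = c) : ‖b‖ * |ξ| ≤ ‖c‖ + m * ‖a‖ := by
  calc ‖b‖ * |ξ| = ‖ξ * Complex.I * b‖ := by simp [mul_comm]
    _ = ‖(m : ℂ) * a - c‖ := by rw [← h, sub_sub_cancel]
    _ ≤ ‖(m : ℂ) * a‖ + ‖c‖ := norm_sub_le _ _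
    _ = ‖c‖ + m * ‖a‖ := by rw [norm_mul, Complex.norm_natCast, add_comm]

variable {s : ℕ}

lemma norm_splineFourier_zero_mul_abs_le (hs : s ≠ 0) (m : ℕ) (ξ : ℝ) :
    ‖splineFourier s 0 m ξ‖ * |ξ| ≤ 2 * s + m * ‖splineFourier s 0 (m - 1) ξ‖ := by
  refine (norm_mul_abs_le_of_sub_eq ((integral_fspline_smul_deriv_waveMonomial s 0 m ξ).symm.trans
    (integral_fspline_zero_smul_deriv hs (hasDerivAt_waveMonomial ξ m) (by fun_prop)))).trans ?_
  gcongr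
  refine (norm_sum_le_of_le _ fun j _ => (?_ : _ ≤ (2 : ℝ))).trans_eq ?_
  · rw [norm_smul, norm_pow, norm_neg, norm_one, one_pow, one_mul]
    refine (norm_sub_le _ _).trans ?_
    linarith [norm_waveMonomial_le_one ξ m (abs_le.2 (node_mem_Icc (n := s) (i := j))),
      norm_waveMonomial_le_one ξ m (abs_le.2 (node_mem_Icc (n := s) (i := j + 1)))]
  · rw [Finset.sum_const, Finset.card_range, nsmul_eq_mul, mul_comm]

lemma norm_splineFourier_succ_mul_abs_le (hs_even : Even s) {k : ℕ} (hk : k + 1 < s) (m : ℕ)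
    (ξ : ℝ) : ‖splineFourier s (k + 1) m ξ‖ * |ξ| ≤
      ‖splineFourier s k m ξ‖ + m * ‖splineFourier s (k + 1) (m - 1) ξ‖ := by
  have h := norm_mul_abs_le_of_sub_eq
    ((integral_fspline_smul_deriv_waveMonomial s (k + 1) m ξ).symm.trans
      (integral_fspline_succ_smul_deriv (by omega) (fspline_succ_one hs_even hk)
        (hasDerivAt_waveMonomial ξ m) (by fun_prop)))
  rwa [norm_neg] at h

lemma le_add_two_mul_of_le_add {c : ℕ → ℕ → ℝ} {B η : ℝ} {n M : ℕ} (hB : 0 ≤ B) (hη : 0 ≤ η)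
    (hsmall : M * η * (B + 2 * n) ≤ 2) (hzero : ∀ m, c 0 m ≤ B)
    (hstep : ∀ k < n, ∀ m, c (k + 1) m ≤ c k m + m * η * c (k + 1) (m - 1)) {k : ℕ} (hk : k ≤ n)
    {m : ℕ} (hm : m ≤ M) : c k m ≤ B + 2 * k := by
  induction k generalizing m with
  | zero => simpa using hzero m
  | succ k ihk =>
    have hprev : ∀ m ≤ M, c k m ≤ B + 2 * k := fun m hm => ihk (by omega) hm
    have hkn : ((k + 1 : ℕ) : ℝ) ≤ n := by exact_mod_cast hk
    induction m with
    | zero =>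
      have h := hstep k hk 0
      rw [Nat.cast_zero, zero_mul, zero_mul, add_zero] at h
      push_cast
      linarith [hprev 0 hm]
    | succ m ihm =>
      have hlower : (m + 1 : ℕ) * η * c (k + 1) m ≤ 2 := calc
        (m + 1 : ℕ) * η * c (k + 1) m ≤ (m + 1 : ℕ) * η * (B + 2 * n) := by
          gcongr
          exact (ihm (by omega)).trans (by gcongr)
        _ ≤ M * η * (B + 2 * n) := by gcongr
        _ ≤ 2 := hsmall
      have h := hstep k hk (m + 1)
      rw [Nat.add_sub_cancel] at h
      push_cast at hlower h ⊢
      linarith [hprev (m + 1) hm]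

theorem norm_splineFourier_mul_abs_pow_le (hs_even : Even s) {ξ : ℝ} (hξ0 : ξ ≠ 0) {m : ℕ}
    (hξ : 2 * m * s ≤ |ξ|) {k : ℕ} (hk : k < s) :
    ‖splineFourier s k m ξ‖ * |ξ| ^ (k + 1) ≤ 2 * s + 2 * (k + 1) := by
  have hs : s ≠ 0 := by omega
  have hξpos : 0 < |ξ| := abs_pos.2 hξ0
  let c : ℕ → ℕ → ℝ := fun
    | 0, _ => 2 * s
    | k + 1, m => ‖splineFourier s k m ξ‖ * |ξ| ^ (k + 1)
  have hstep : ∀ k < s, ∀ m, c (k + 1) m ≤ c k m + m * |ξ|⁻¹ * c (k + 1) (m - 1) := by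
    intro k hk m
    cases k with
    | zero =>
      have h := norm_splineFourier_zero_mul_abs_le hs m ξ
      simp only [c, zero_add, pow_one]
      field_simp
      linarith
    | succ k =>
      have h := norm_splineFourier_succ_mul_abs_le hs_even hk m ξ
      simp only [c]
      calc _ = ‖splineFourier s (k + 1) m ξ‖ * |ξ| * |ξ| ^ (k + 1) := by ring
        _ ≤ (‖splineFourier s k m ξ‖ + m * ‖splineFourier s (k + 1) (m - 1) ξ‖) *
            |ξ| ^ (k + 1) := by gcongr
        _ = _ := by
          field_simp
          ring
  have hsmall : m * |ξ|⁻¹ * (2 * s + 2 * s) ≤ 2 := by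
    field_simp
    linarith
  have h := le_add_two_mul_of_le_add (by positivity) (by positivity) hsmall (fun _ => le_rfl)
    hstep (Nat.succ_le_of_lt hk) le_rfl
  push_cast at h
  exact h

end SplineFourier

section SplinePoisson

open MeasureTheory FourierTransform Filter

lemma hasSum_int_one_div_sq : HasSum (fun l : ℤ => 1 / (l : ℝ) ^ 2) (π ^ 2 / 3) := by
  have hsucc := (hasSum_nat_add_iff' 1).2 hasSum_zeta_two
  simp only [Finset.range_one, Finset.sum_singleton, Nat.cast_zero, ne_eq, OfNat.ofNat_ne_zero,
    not_false_eq_true, zero_pow, div_zero, sub_zero] at hsucc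
  have h := HasSum.of_nat_of_neg_add_one (f := fun l : ℤ => 1 / (l : ℝ) ^ 2)
    (m := π ^ 2 / 6) (m' := π ^ 2 / 6) (by simpa using hasSum_zeta_two)
    (hsucc.congr_fun fun n => by push_cast; ring)
  rwa [show π ^ 2 / 6 + π ^ 2 / 6 = π ^ 2 / 3 by ring] at h

theorem norm_tsum_sub_fourier_zero_le {f : ℝ → ℂ} {C : ℝ} (hf : Continuous f)
    (hsupp : HasCompactSupport f) (hC : ∀ l : ℤ, l ≠ 0 → ‖𝓕 f l‖ ≤ C * (1 / (l : ℝ) ^ 2)) :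
    ‖∑' k : ℤ, f k - 𝓕 f 0‖ ≤ C * (π ^ 2 / 3) := by
  have hbound : ∀ l : ℤ, ‖if l = 0 then 0 else 𝓕 f l‖ ≤ C * (1 / (l : ℝ) ^ 2) := by
    intro l
    split_ifs with hl
    · simp [hl]
    · exact hC l hl
  have hsq := hasSum_int_one_div_sq.mul_left C
  have hsum : Summable fun l : ℤ => 𝓕 f l := by
    refine (summable_congr_cofinite ?_).1 (Summable.of_norm_bounded hsq.summable hbound)
    filter_upwards [(Set.finite_singleton (0 : ℤ)).compl_mem_cofinite] with l hl
    exact if_neg hl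
  have hdecay : f =O[cocompact ℝ] fun x => |x| ^ (-2 : ℝ) := by
    rw [hasCompactSupport_iff_eventuallyEq, coclosedCompact_eq_cocompact] at hsupp
    exact hsupp.trans_isBigO (Asymptotics.isBigO_zero _ _)
  have hpoisson := Real.tsum_eq_tsum_fourier_of_rpow_decay_of_summable hf one_lt_two hdecay hsum 0
  simp only [zero_add, QuotientAddGroup.mk_zero, fourier_eval_zero, mul_one] at hpoisson
  rw [hpoisson, hsum.tsum_eq_add_tsum_ite 0, Int.cast_zero, add_sub_cancel_left]
  exact tsum_of_norm_bounded hsq hbound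

/-- The weighted spline `x ^ m g(x)`, dilated by `M` and extended by zero, so that its values at
the integers are the terms of a Riemann sum for the moment of order `m`. -/
noncomputable def dilatedSpline (s m : ℕ) (M x : ℝ) : ℂ :=
  (Set.Icc (-1 : ℝ) 1).indicator
    (fun x => ((fspline s (s - 1) x * x ^ m : ℝ) : ℂ)) (x / M)

variable {s : ℕ}

lemma fspline_sub_one_eq_zero_of_abs_eq_one (hs_even : Even s) (hs : 2 ≤ s) {x : ℝ}
    (hx : |x| = 1) : fspline s (s - 1) x = 0 := by
  obtain ⟨k, rfl⟩ := Nat.exists_eq_add_of_le' hs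
  rcases eq_or_eq_neg_of_abs_eq hx with rfl | rfl
  · exact fspline_succ_one hs_even (by omega)
  · exact fspline_succ_neg_one _ k

lemma dilatedSpline_of_le_abs (hs_even : Even s) (hs : 2 ≤ s) (m : ℕ) {M x : ℝ} (hM : 0 < M)
    (hx : M ≤ |x|) : dilatedSpline s m M x = 0 := by
  refine Set.indicator_apply_eq_zero.2 fun hmem => ?_
  have habs : 1 ≤ |x / M| := by rwa [abs_div, abs_of_pos hM, one_le_div hM]
  rw [fspline_sub_one_eq_zero_of_abs_eq_one hs_even hs (le_antisymm (abs_le.2 hmem) habs),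
    zero_mul, Complex.ofReal_zero]

lemma hasCompactSupport_dilatedSpline (hs_even : Even s) (hs : 2 ≤ s) (m : ℕ) {M : ℝ}
    (hM : 0 < M) : HasCompactSupport (dilatedSpline s m M) :=
  HasCompactSupport.intro (isCompact_Icc (a := -M) (b := M)) fun _ hx =>
    dilatedSpline_of_le_abs hs_even hs m hM (le_of_not_ge fun h => hx (abs_le.1 h))

lemma continuous_dilatedSpline (hs_even : Even s) (hs : 2 ≤ s) (m : ℕ) (M : ℝ) :
    Continuous (dilatedSpline s m M) := by
  have hcont : Continuous (fspline s (s - 1)) := by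
    obtain ⟨k, rfl⟩ := Nat.exists_eq_add_of_le' hs
    exact continuous_fspline_succ (k + 2) k
  refine (continuous_indicator (fun a ha => ?_) ?_).comp (continuous_id.div_const M)
  · rw [frontier_Icc (by norm_num)] at ha
    have habs : |a| = 1 := by rcases ha with rfl | rfl <;> simp
    rw [fspline_sub_one_eq_zero_of_abs_eq_one hs_even hs habs, zero_mul, Complex.ofReal_zero]
  · exact (Complex.continuous_ofReal.comp (hcont.mul (continuous_pow m))).continuousOn

lemma fourier_dilatedSpline (s m : ℕ) {M : ℝ} (hM : 0 < M) (w : ℝ) :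
    𝓕 (dilatedSpline s m M) w = M * splineFourier s (s - 1) m (2 * π * M * w) := by
  have hpoint : ∀ v : ℝ, Complex.exp ((-2 * π * v * w : ℝ) * Complex.I) • dilatedSpline s m M v =
      (Set.Icc (-1 : ℝ) 1).indicator (fun x => fspline s (s - 1) x •
        waveMonomial (2 * π * M * w) m x) (v / M) := by
    intro v
    rw [dilatedSpline, Set.indicator_apply, Set.indicator_apply]
    split_ifs
    · have hphase : -2 * π * v * w = -(2 * π * M * w) * (v / M) := by field_simp
      rw [hphase, waveMonomial, Complex.real_smul, smul_eq_mul]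
      push_cast
      ring
    · rw [smul_zero]
  simp_rw [Real.fourier_real_eq_integral_exp_smul, hpoint]
  rw [Measure.integral_comp_div ((Set.Icc (-1 : ℝ) 1).indicator fun x =>
      fspline s (s - 1) x • waveMonomial (2 * π * M * w) m x),
    integral_indicator measurableSet_Icc, integral_Icc_eq_integral_Ioc,
    ← intervalIntegral.integral_of_le (by norm_num), abs_of_pos hM, Complex.real_smul,
    splineFourier]

lemma splineFourier_sub_one_zero (s m : ℕ) : splineFourier s (s - 1) m 0 = splineMoment s m := by
  rw [splineFourier, splineMoment, ← intervalIntegral.integral_ofReal]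
  refine intervalIntegral.integral_congr fun x _ => ?_
  simp [waveMonomial]

lemma fourier_dilatedSpline_zero (s m : ℕ) {M : ℝ} (hM : 0 < M) :
    𝓕 (dilatedSpline s m M) 0 = (M * splineMoment s m : ℝ) := by
  rw [fourier_dilatedSpline s m hM, mul_zero, splineFourier_sub_one_zero, Complex.ofReal_mul]

lemma norm_fourier_dilatedSpline_le (hs_even : Even s) (hs : 2 ≤ s) {m : ℕ} (hm : m ≤ 6)
    {M : ℝ} (hM : 2 * s ≤ M) {l : ℤ} (hl : l ≠ 0) :
    ‖𝓕 (dilatedSpline s m M) l‖ ≤ M * (4 * s / (2 * π * M) ^ s) * (1 / (l : ℝ) ^ 2) := by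
  have hs0 : (0 : ℝ) < s := by positivity
  have hM0 : 0 < M := by linarith
  have hl1 : (1 : ℝ) ≤ |(l : ℝ)| := by exact_mod_cast Int.one_le_abs hl
  have habs : |2 * π * M * l| = 2 * π * M * |(l : ℝ)| := by
    rw [abs_mul, abs_of_pos (by positivity)]
  have hne : 2 * π * M * l ≠ 0 := by positivity
  have hlarge : 2 * m * s ≤ |2 * π * M * l| := calc
    (2 : ℝ) * m * s ≤ 2 * 6 * s := by
      gcongr
      exact_mod_cast hm
    _ ≤ 2 * π * M := by nlinarith [Real.pi_gt_three]
    _ ≤ |2 * π * M * l| := by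
      rw [habs]
      exact le_mul_of_one_le_right (by positivity) hl1
  have hdecay := norm_splineFourier_mul_abs_pow_le hs_even hne hlarge (show s - 1 < s by omega)
  have hcast : ((s - 1 : ℕ) : ℝ) + 1 = s := by
    rw [Nat.cast_sub (by omega), Nat.cast_one, sub_add_cancel]
  rw [hcast, Nat.sub_add_cancel (by omega), habs, mul_pow] at hdecay
  have hpow : (l : ℝ) ^ 2 ≤ |(l : ℝ)| ^ s := by
    rw [← sq_abs]
    exact pow_le_pow_right₀ hl1 hs
  rw [fourier_dilatedSpline s m hM0, norm_mul, Complex.norm_real, Real.norm_of_nonneg hM0.le,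
    mul_assoc M]
  gcongr
  rw [div_mul_div_comm, mul_one, le_div_iff₀ (by positivity)]
  calc _ ≤ ‖splineFourier s (s - 1) m (2 * π * M * l)‖ * ((2 * π * M) ^ s * |(l : ℝ)| ^ s) := by
        gcongr
    _ ≤ 4 * s := by linarith

/-- The Riemann sum, up to the factor `1 / (N + 1)`, for the moment of order `m` of the spline
over the points `k / (N + 1)`. -/
noncomputable def splineSum (s N m : ℕ) : ℝ :=
  ∑ k ∈ Finset.Icc (-(N : ℤ)) N, fspline s (s - 1) (k / ((N : ℝ) + 1)) *
    ((k : ℝ) / ((N : ℝ) + 1)) ^ m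

lemma tsum_dilatedSpline (hs_even : Even s) (hs : 2 ≤ s) (m N : ℕ) :
    ∑' k : ℤ, dilatedSpline s m (N + 1) k = splineSum s N m := by
  have hM : (0 : ℝ) < N + 1 := by positivity
  rw [splineSum, tsum_eq_sum (s := Finset.Icc (-(N : ℤ)) N) fun k hk => ?_, Complex.ofReal_sum]
  · refine Finset.sum_congr rfl fun k hk => ?_
    have hk : |k| ≤ N := abs_le.2 (Finset.mem_Icc.1 hk)
    have hk : |(k : ℝ)| ≤ N := by exact_mod_cast hk
    refine Set.indicator_of_mem (Set.mem_Icc.2 (abs_le.1 ?_)) _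
    rw [abs_div, abs_of_pos hM, div_le_one hM]
    linarith
  · have hk : (N : ℤ) + 1 ≤ |k| := by
      rw [Finset.mem_Icc, ← abs_le] at hk
      omega
    exact dilatedSpline_of_le_abs hs_even hs m hM (by exact_mod_cast hk)

theorem abs_splineSum_sub_splineMoment_le (hs_even : Even s) (hs : 2 ≤ s) {m : ℕ} (hm : m ≤ 6)
    {N : ℕ} (hN : 2 * s ≤ N) :
    |splineSum s N m - ((N : ℝ) + 1) * splineMoment s m| ≤
      ((N : ℝ) + 1) * (16 * s / (2 * π * ((N : ℝ) + 1)) ^ s) := by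
  have hM : (0 : ℝ) < N + 1 := by positivity
  have hMs : 2 * (s : ℝ) ≤ N + 1 := by exact_mod_cast hN.trans N.le_succ
  have hpoisson := norm_tsum_sub_fourier_zero_le (continuous_dilatedSpline hs_even hs m (N + 1))
    (hasCompactSupport_dilatedSpline hs_even hs m hM)
    (fun l hl => norm_fourier_dilatedSpline_le hs_even hs hm hMs hl)
  rw [tsum_dilatedSpline hs_even hs, fourier_dilatedSpline_zero s m hM, ← Complex.ofReal_sub,
    Complex.norm_real, Real.norm_eq_abs] at hpoisson
  have hpi : π ^ 2 / 3 ≤ 4 := by nlinarith [Real.pi_lt_d2, Real.pi_pos]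
  calc _ ≤ _ := hpoisson
    _ ≤ ((N : ℝ) + 1) * (4 * s / (2 * π * (N + 1)) ^ s) * 4 := by gcongr
    _ = _ := by ring

end SplinePoisson

section WeightBounds

variable {s N : ℕ}

lemma two_mul_pow_self_le_succ_pow {n : ℕ} (hn : n ≠ 0) : 2 * n ^ n ≤ (n + 1) ^ n := by
  have hn0 : (n : ℝ) ≠ 0 := Nat.cast_ne_zero.2 hn
  have hinv : (0 : ℝ) ≤ 1 / n := by positivity
  have hbernoulli := one_add_mul_le_pow (a := 1 / (n : ℝ)) (by linarith) n
  rw [mul_one_div_cancel hn0, one_add_div hn0, div_pow, le_div_iff₀ (by positivity)] at hbernoulli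
  have hreal : (2 : ℝ) * n ^ n ≤ (n + 1) ^ n := by linarith
  exact_mod_cast hreal

lemma two_pow_mul_factorial_le_pow_self {n : ℕ} (hn : 6 ≤ n) :
    2 ^ n * n.factorial ≤ n ^ n := by
  induction n, hn using Nat.le_induction with
  | base => decide
  | succ n hn ih =>
    calc 2 ^ (n + 1) * (n + 1).factorial = 2 * (2 ^ n * n.factorial) * (n + 1) := by
          rw [Nat.factorial_succ]; ring
      _ ≤ 2 * n ^ n * (n + 1) := by gcongr
      _ ≤ (n + 1) ^ n * (n + 1) := by
          gcongr
          exact two_mul_pow_self_le_succ_pow (by omega)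
      _ = (n + 1) ^ (n + 1) := by ring

lemma mul_le_twelve_pow {n : ℕ} (hn : 6 ≤ n) :
    32000 * ((n + 1) * (n + 2)) ≤ 3 * 12 ^ n := by
  induction n, hn using Nat.le_induction with
  | base => decide
  | succ n hn ih =>
    rw [pow_succ]
    nlinarith

lemma mul_factorial_le_pow (hs : 6 ≤ s) {M : ℝ} (hM : 2 * s ≤ M) :
    32000 * ((s + 1) * (s + 2)) * (s.factorial : ℝ) ≤ 3 * (π * M) ^ s := by
  have hfact : (2 : ℝ) ^ s * s.factorial ≤ (s : ℝ) ^ s := by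
    exact_mod_cast two_pow_mul_factorial_le_pow_self hs
  have htwelve : (32000 : ℝ) * ((s + 1) * (s + 2)) ≤ 3 * 12 ^ s := by
    exact_mod_cast mul_le_twelve_pow hs
  have hsix : 6 * (s : ℝ) ≤ π * M := by nlinarith [Real.pi_gt_three, Nat.cast_nonneg (α := ℝ) s]
  calc 32000 * ((s + 1) * (s + 2)) * (s.factorial : ℝ) ≤ 3 * 12 ^ s * s.factorial := by gcongr
    _ = 3 * 6 ^ s * (2 ^ s * s.factorial) := by
        rw [show (12 : ℝ) = 6 * 2 by norm_num, mul_pow]; ring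
    _ ≤ 3 * 6 ^ s * (s : ℝ) ^ s := by gcongr
    _ = 3 * (6 * s) ^ s := by rw [mul_pow]; ring
    _ ≤ 3 * (π * M) ^ s := by gcongr

lemma poisson_tail_le (hs_even : Even s) (hs : 6 ≤ s) {M : ℝ} (hM : 2 * s ≤ M) :
    2 * (16 * s / (2 * π * M) ^ s) ≤
      0.001 * (3 / (4 * (s + 2) * (s + 1))) * splineMoment s 0 := by
  have hM0 : 0 < M := lt_of_lt_of_le (by positivity) hM
  have hmoment : (0.001 : ℝ) * (3 / (4 * (s + 2) * (s + 1))) * (4 * s / (2 ^ s * s.factorial)) =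
      3 * s / (1000 * ((s + 1) * (s + 2)) * (2 ^ s * s.factorial)) := by
    field_simp
    norm_num
  have htail : 2 * (16 * s / (2 * π * M) ^ s) = 32 * s / (2 ^ s * (π * M) ^ s) := by
    rw [mul_assoc 2 π, mul_pow]
    ring
  rw [splineMoment_zero hs_even (by omega), hmoment, htail,
    div_le_div_iff₀ (by positivity) (by positivity)]
  calc 32 * (s : ℝ) * (1000 * ((s + 1) * (s + 2)) * (2 ^ s * s.factorial)) =
      s * 2 ^ s * (32000 * ((s + 1) * (s + 2)) * (s.factorial : ℝ)) := by ring
    _ ≤ s * 2 ^ s * (3 * (π * M) ^ s) :=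
      mul_le_mul_of_nonneg_left (mul_factorial_le_pow hs hM) (by positivity)
    _ = _ := by ring

lemma gtilde_div (s N : ℕ) (k : ℤ) :
    gtilde s ((k : ℝ) / (2 * ((N : ℝ) + 1))) = fspline s (s - 1) (k / ((N : ℝ) + 1)) := by
  rw [gtilde]
  congr 1
  field_simp

lemma gnorm_eq_splineSum (s N : ℕ) : gnorm s N = splineSum s N 0 := by
  simp only [gnorm, splineSum, gtilde_div, pow_zero, mul_one]

lemma sum_sigmaWeight_mul_pow (s N m : ℕ) :
    ∑ k ∈ Finset.Icc (-(N : ℤ)) N, sigmaWeight s N k * (k : ℝ) ^ m =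
      splineSum s N m / splineSum s N 0 * ((N : ℝ) + 1) ^ m := by
  rw [← gnorm_eq_splineSum, splineSum, Finset.sum_div, Finset.sum_mul]
  refine Finset.sum_congr rfl fun k _ => ?_
  rw [sigmaWeight, gtilde_div, div_pow]
  field_simp

lemma splineSum_zero_pos_and_le (hs_even : Even s) (hs : 6 ≤ s) (hN : 2 * s ≤ N) {m : ℕ}
    (hm : m ≤ 6) {μ : ℝ} (hmom : splineMoment s m = splineMoment s 0 * μ)
    (hμ : 3 / (4 * (s + 2) * (s + 1)) ≤ μ) (hμ1 : μ ≤ 1 / 2) :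
    0 < splineSum s N 0 ∧ splineSum s N m ≤ 1.001 * μ * splineSum s N 0 := by
  have hNs : 2 * (s : ℝ) ≤ (N : ℝ) + 1 := by exact_mod_cast hN.trans N.le_succ
  have hzero :=
    (abs_le.1 (abs_splineSum_sub_splineMoment_le hs_even (by omega) (Nat.zero_le _) hN)).1
  have hsum := (abs_le.1 (abs_splineSum_sub_splineMoment_le hs_even (by omega) hm hN)).2
  rw [hmom, ← mul_assoc] at hsum
  have hpos : 0 < splineMoment s 0 := by
    rw [splineMoment_zero hs_even (by omega)]
    positivity
  have hμ0 : 0 < μ := lt_of_lt_of_le (by positivity) hμ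
  have htail : 2 * (((N : ℝ) + 1) * (16 * s / (2 * π * (N + 1)) ^ s)) ≤
      0.001 * (μ * ((N + 1) * splineMoment s 0)) := calc
    _ = ((N : ℝ) + 1) * (2 * (16 * s / (2 * π * (N + 1)) ^ s)) := by ring
    _ ≤ (N + 1) * (0.001 * (3 / (4 * (s + 2) * (s + 1))) * splineMoment s 0) :=
      mul_le_mul_of_nonneg_left (poisson_tail_le hs_even hs hNs) (by positivity)
    _ ≤ (N + 1) * (0.001 * μ * splineMoment s 0) := by gcongr
    _ = _ := by ring
  have hE : 0 ≤ ((N : ℝ) + 1) * (16 * s / (2 * π * (N + 1)) ^ s) := by positivity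
  have hP : 0 < ((N : ℝ) + 1) * splineMoment s 0 := by positivity
  generalize ((N : ℝ) + 1) * (16 * s / (2 * π * (N + 1)) ^ s) = E at *
  generalize ((N : ℝ) + 1) * splineMoment s 0 = P at *
  constructor <;> nlinarith

lemma ratio_four_le_ratio_two (s : ℕ) :
    3 / (4 * ((s : ℝ) + 2) * (s + 1)) ≤ 1 / (2 * (s + 1)) := by
  rw [div_le_div_iff₀ (by positivity) (by positivity)]
  nlinarith [Nat.cast_nonneg (α := ℝ) s]

lemma ratio_two_le_half (s : ℕ) : 1 / (2 * ((s : ℝ) + 1)) ≤ 1 / 2 := by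
  gcongr
  linarith [Nat.cast_nonneg (α := ℝ) s]

lemma sum_sigmaWeight_mul_pow_le (hs_even : Even s) (hs : 6 ≤ s) (hN : 2 * s ≤ N) {m : ℕ}
    (hm : m ≤ 6) {μ : ℝ} (hmom : splineMoment s m = splineMoment s 0 * μ)
    (hμ : 3 / (4 * (s + 2) * (s + 1)) ≤ μ) (hμ1 : μ ≤ 1 / 2) :
    ∑ k ∈ Finset.Icc (-(N : ℤ)) N, sigmaWeight s N k * (k : ℝ) ^ m ≤
      1.001 * μ * ((N : ℝ) + 1) ^ m := by
  obtain ⟨hpos, hle⟩ := splineSum_zero_pos_and_le hs_even hs hN hm hmom hμ hμ1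
  rw [sum_sigmaWeight_mul_pow]
  gcongr
  exact (div_le_iff₀ hpos).2 hle

theorem sum_sigmaWeight_sq_le (s N : ℕ) (hs_even : Even s) (hs : 6 ≤ s) (hN : 2 * s ≤ N) :
    ∑ k ∈ Finset.Icc (-(N : ℤ)) N, sigmaWeight s N k * (k : ℝ) ^ 2 ≤
      1.001 / (2 * ((s : ℝ) + 1)) * ((N : ℝ) + 1) ^ 2 :=
  (sum_sigmaWeight_mul_pow_le hs_even hs hN (by norm_num) (splineMoment_two hs_even (by omega))
    (ratio_four_le_ratio_two s) (ratio_two_le_half s)).trans_eq (by ring)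

theorem sum_sigmaWeight_pow_four_le (s N : ℕ) (hs_even : Even s) (hs : 6 ≤ s)
    (hN : 2 * s ≤ N) :
    ∑ k ∈ Finset.Icc (-(N : ℤ)) N, sigmaWeight s N k * (k : ℝ) ^ 4 ≤
      3 * 1.001 / (4 * ((s : ℝ) + 2) * ((s : ℝ) + 1)) * ((N : ℝ) + 1) ^ 4 :=
  (sum_sigmaWeight_mul_pow_le hs_even hs hN (by norm_num) (splineMoment_four hs_even (by omega))
    le_rfl ((ratio_four_le_ratio_two s).trans (ratio_two_le_half s))).trans_eq (by ring)

theorem sigmaWeight_nonneg (s N : ℕ) (hs_even : Even s) (hs : s ≠ 0) (k : ℤ)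
    (hk : k ∈ Finset.Icc (-(N : ℤ)) N) : 0 ≤ sigmaWeight s N k := by
  have hnonneg : ∀ k ∈ Finset.Icc (-(N : ℤ)) N,
      0 ≤ gtilde s ((k : ℝ) / (2 * ((N : ℝ) + 1))) := by
    intro k hk
    rw [gtilde_div]
    have hk : |k| < N + 1 := Int.lt_add_one_iff.2 (abs_le.2 (Finset.mem_Icc.1 hk))
    have hk : |(k : ℝ)| < N + 1 := by exact_mod_cast hk
    refine fspline_nonneg hs_even hs (abs_lt.1 ?_)
    rwa [abs_div, abs_of_pos (by positivity : (0 : ℝ) < N + 1), div_lt_one (by positivity)]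
  exact div_nonneg (hnonneg k hk) (Finset.sum_nonneg hnonneg)

end WeightBounds

lemma mul_pow_le_mul_pow_mul_pow {A d M t δ : ℝ} {p q : ℕ} (hd : 0 ≤ d) (hM : 0 ≤ M) (ht : 0 ≤ t)
    (hA : A ≤ d * M ^ (p + q)) (htM : t * M ≤ δ) : A * t ^ q ≤ d * M ^ p * δ ^ q :=
  calc A * t ^ q ≤ d * M ^ (p + q) * t ^ q := by gcongr
    _ = d * M ^ p * (t * M) ^ q := by ring
    _ ≤ d * M ^ p * δ ^ q := by gcongr

theorem lipschitz_type_kernel_bounds_near_zero_general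
    (s N : ℕ) (hs_even : Even s) (hs : 6 ≤ s) (hN : 2 * s ≤ N) (δ : ℝ)
    (x y : Mat3) (hx : IsSO3 x) (hy : IsSO3 y)
    (hnear : rotAngle (y⁻¹ * x) ≤ δ / ((N : ℝ) + 1)) :
    (∀ i k : Fin 3,
      (|Xx i (Xx i (sigmaK s N)) x y - iteratedDeriv 2 (sigmaT s N) 0| ≤
          (3 * 1.001 / (4 * ((s : ℝ) + 2) * ((s : ℝ) + 1)) / 2) * ((N : ℝ) + 1) ^ 2 * δ ^ 2) ∧
      |Xx i (Xx i (Xy k (sigmaK s N))) x y| ≤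
        (3 * 1.001 / (4 * ((s : ℝ) + 2) * ((s : ℝ) + 1))) *
            (((N : ℝ) + 1) ^ 3 * δ + (1 / 4) * ((N : ℝ) + 1) ^ 2 * δ ^ 2)
          + (1.001 / (2 * ((s : ℝ) + 1)) / 4) * ((N : ℝ) + 1) * δ) ∧
    (∀ i j n : Fin 3, i ≠ j → j ≠ n → i ≠ n →
      (|Xx j (Xx i (sigmaK s N)) x y - (eps3 j i n / 2) * Xx n (sigmaK s N) x y| ≤
          (3 * 1.001 / (4 * ((s : ℝ) + 2) * ((s : ℝ) + 1)) / 4) * ((N : ℝ) + 1) ^ 2 * δ ^ 2) ∧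
      ∀ k : Fin 3,
        |Xx j (Xx i (Xy k (sigmaK s N))) x y
            - (eps3 j i n / 2) * Xx n (Xy k (sigmaK s N)) x y| ≤
          (3 * 1.001 / (4 * ((s : ℝ) + 2) * ((s : ℝ) + 1))) *
              (((N : ℝ) + 1) ^ 3 * δ + (1 / 4) * ((N : ℝ) + 1) ^ 2 * δ ^ 2)
            + (1.001 / (2 * ((s : ℝ) + 1)) / 4) * ((N : ℝ) + 1) * δ) := by
  have hw := sigmaWeight_nonneg s N hs_even (by omega)
  have hA₂ := sum_sigmaWeight_sq_le s N hs_even hs hN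
  have hA₄ := sum_sigmaWeight_pow_four_le s N hs_even hs hN
  have hM : (0 : ℝ) < (N : ℝ) + 1 := by positivity
  have ht := rotAngle_nonneg (y⁻¹ * x)
  have htM := (le_div_iff₀ hM).1 hnear
  have h₂₁ := mul_pow_le_mul_pow_mul_pow (p := 1) (q := 1) (by positivity) hM.le ht hA₂ htM
  have h₄₂ := mul_pow_le_mul_pow_mul_pow (p := 2) (q := 2) (by positivity) hM.le ht hA₄ htM
  have h₄₁ := mul_pow_le_mul_pow_mul_pow (p := 3) (q := 1) (by positivity) hM.le ht hA₄ htM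
  have hδ : 0 ≤ δ := (mul_nonneg ht hM.le).trans htM
  simp only [pow_one] at h₂₁ h₄₁
  simp only [iteratedDeriv_two_sigmaT, sub_neg_eq_add, sigmaK_eq_cosKernel]
  refine ⟨fun i k => ⟨?_, ?_⟩, fun i j n hij hjn hin => ⟨?_, fun k => ?_⟩⟩
  · exact (abs_Xx_Xx_cosKernel_self_add_le hw hx hy i).trans (by linarith)
  · exact (abs_Xx_Xx_Xy_cosKernel_self_le hw hx hy i k).trans (by linarith)
  · exact (abs_Xx_Xx_cosKernel_sub_le hw hx hy hij hjn hin).trans (by linarith)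
  · refine (abs_Xx_Xx_Xy_cosKernel_sub_le hw hx hy hij hjn hin k).trans ?_
    have : 0 ≤ 3 * 1.001 / (4 * ((s : ℝ) + 2) * ((s : ℝ) + 1)) * (((N : ℝ) + 1) ^ 3 * δ) := by
      positivity
    have : 0 ≤ 1.001 / (2 * ((s : ℝ) + 1)) / 4 * ((N : ℝ) + 1) * δ := by positivity
    linarith

theorem lipschitz_type_kernel_bounds_near_zero
    (s N : ℕ) (hs_even : Even s) (hs : 6 ≤ s) (hN : 2 * s ≤ N)
    (δ : ℝ) (hδ0 : 0 ≤ δ) (hδπ : δ ≤ π / 2)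
    (x y : Mat3) (hx : IsSO3 x) (hy : IsSO3 y)
    (hnear : rotAngle (y⁻¹ * x) ≤ δ / ((N : ℝ) + 1)) :
    (∀ i k : Fin 3,
      (|Xx i (Xx i (sigmaK s N)) x y - iteratedDeriv 2 (sigmaT s N) 0| ≤
          (3 * 1.001 / (4 * ((s : ℝ) + 2) * ((s : ℝ) + 1)) / 2) * ((N : ℝ) + 1) ^ 2 * δ ^ 2) ∧
      |Xx i (Xx i (Xy k (sigmaK s N))) x y| ≤
        (3 * 1.001 / (4 * ((s : ℝ) + 2) * ((s : ℝ) + 1))) *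
            (((N : ℝ) + 1) ^ 3 * δ + (1 / 4) * ((N : ℝ) + 1) ^ 2 * δ ^ 2)
          + (1.001 / (2 * ((s : ℝ) + 1)) / 4) * ((N : ℝ) + 1) * δ) ∧
    (∀ i j n : Fin 3, i ≠ j → j ≠ n → i ≠ n →
      (|Xx j (Xx i (sigmaK s N)) x y - (eps3 j i n / 2) * Xx n (sigmaK s N) x y| ≤
          (3 * 1.001 / (4 * ((s : ℝ) + 2) * ((s : ℝ) + 1)) / 4) * ((N : ℝ) + 1) ^ 2 * δ ^ 2) ∧
      ∀ k : Fin 3, k = i ∨ k = j ∨ k = n →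
        |Xx j (Xx i (Xy k (sigmaK s N))) x y
            - (eps3 j i n / 2) * Xx n (Xy k (sigmaK s N)) x y| ≤
          (3 * 1.001 / (4 * ((s : ℝ) + 2) * ((s : ℝ) + 1))) *
              (((N : ℝ) + 1) ^ 3 * δ + (1 / 4) * ((N : ℝ) + 1) ^ 2 * δ ^ 2)
            + (1.001 / (2 * ((s : ℝ) + 1)) / 4) * ((N : ℝ) + 1) * δ) := by
  obtain ⟨hsame, hdist⟩ := lipschitz_type_kernel_bounds_near_zero_general s N hs_even hs hN δ
    x y hx hy hnear
  exact ⟨hsame, fun i j n hij hjn hin => (hdist i j n hij hjn hin).imp_right fun h k _ => h k⟩
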